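/- There exist constants c, C > 0 and an integer m₁ ≥ 3 such that the following holds: let (D, Ω) be a solution of the rotating patch equation with |D| = π, where ∂D = {(1 + u(θ))(cos θ, sin θ) : θ ∈ 𝕋} for a C² function u : 𝕋 → (−1, ∞) that is even, (2π/m)-periodic for some integer m ≥ m₁, satisfies u′(θ) < 0 for all θ ∈ (0, π/m), and has ‖u‖_{L∞(𝕋)} ≤ 1/2. Set r_min = min_{x ∈ ∂D} |x| = 1 + u(π/m). Then either 1 − r_min ≤ c/m, or ∫_𝕋 u(θ)² dθ ≥ C·(1 − r_min)². -/

import Mathlib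

/-!
The plane is identified with `ℂ` (`toR2`), and the patch becomes the star-shaped domain
`starDom u = {z | |z| < 1 + u (arg z)}` (`Prof.eq_starDom`). With `logPot` the logarithmic potential
of the domain and `w = πΩ`, the patch equation reads `logPot = c + w |x|²` at the boundary points
(`BdryEq`). Write `r₀ = 1 + u (π / m)` for the radius of the tip of a spike, `d = 1 - r₀` for its
depth and `q = ∫ u²`. Assuming `d > 15000 / m` and `q < d² / 2`, two estimates contradict each other.

The *energy comparison* `Prof.step_one` gives `π q / 50 ≤ (π/2 - w) d`. Dilating the domain changes
its logarithmic energy in an explicit way, while to first order the change only involves the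
potential near the boundary, which is prescribed; this bounds the energy from below (`energy_ineq`,
`Prof.energy_lower`). An upper bound (`Prof.energy_upper`) comes from two monotonicity facts: outside
the inscribed disk `|x| < r₀` the potential at a point of the domain is at most the prescribed value
`c + w |x|²`, because along a circle it increases towards the boundary (`Prof.logPot_le`); and the
energy between the domain and the inscribed disk is explicit (`Prof.mutual`) up to a radial integral
controlled by the boundary value at the tip (`Prof.tip_ge`).

The *comparison near the tip* `Prof.step_two` subtracts the boundary identities at the tip and at the
boundary point of radius `r₀ + e`, with `e = d / 1000`. The potential is sliced into circles of
radius `s`. Since `∏ⱼ |r - s e^{i(x + 2πj/m)}| = |r^m - s^m e^{imx}|` (`sum_ell`), the slice potential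
is the potential of a single arc, with all radii raised to the power `m` (`arcPot`,
`Prof.logPot_polar`). If all slices were full circles, the difference of the potentials would be
`(π/2) ((r₀ + e)² - r₀²)`. The slices with `s < r₀` are full; those with `s ≥ r₀ + 2e` contribute at
least as much as required, because the `m`-th powers of the radii are then widely separated
(`arcPot_far`); the slices in between miss only an arc of half length at most `π - t₁`, where `t₁`
is the half width of the slice at radius `r₀ + 2e`, and lose `O(e² (π - t₁))` in total
(`Prof.middle_slice`). Thus `(π/2 - w) e ≤ 16 e² (π - t₁)`, while `(π - t₁) d² ≤ 2 q` (`Prof.tail`).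
Combined with the first estimate this yields `π q / 50 ≤ 32 q / 1000`, which is absurd as `q > 0`.
-/

open MeasureTheory Set Real Bornology

noncomputable section

/-- The plane `ℝ²`. -/
abbrev R2 : Type := EuclideanSpace ℝ (Fin 2)

/-- The point of `ℝ²` with given coordinates. -/
def pt (a b : ℝ) : R2 := (EuclideanSpace.equiv (Fin 2) ℝ).symm ![a, b]

/-- The 2D Newtonian potential kernel `N(x) = (1/(2π)) log |x|`. -/
def nker (x : R2) : ℝ := (1 / (2 * π)) * Real.log ‖x‖

/-- The convolution `1_D * N`. -/
def patchConv (D : Set R2) (x : R2) : ℝ := ∫ y in D, nker (x - y)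

/-- The relative stream function `Ψ(x) = (1_D * N)(x) − (Ω/2)|x|²`. -/
def streamFun (D : Set R2) (Ω : ℝ) (x : R2) : ℝ := patchConv D x - Ω / 2 * ‖x‖ ^ 2

/-- `(D, Ω)` is a solution of the rotating patch equation: `D` is a bounded open
simply connected set whose boundary is a `C²` Jordan curve, and `Ψ` is constant
on `∂D`. -/
def IsPatchSolution (D : Set R2) (Ω : ℝ) : Prop :=
  IsOpen D ∧ IsBounded D ∧ SimplyConnectedSpace D ∧
  (∃ γ : ℝ → R2,
      ContDiff ℝ 2 γ ∧ Function.Periodic γ (2 * π) ∧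
      Set.InjOn γ (Set.Ico 0 (2 * π)) ∧ (∀ t, deriv γ t ≠ 0) ∧
      Set.range γ = frontier D) ∧
  (∃ c : ℝ, ∀ x ∈ frontier D, streamFun D Ω x = c)

/-- Rotation of the plane by angle `α` about the origin. -/
def rot (α : ℝ) (x : R2) : R2 :=
  pt (Real.cos α * x 0 - Real.sin α * x 1) (Real.sin α * x 0 + Real.cos α * x 1)

/-- `D` is `m`-fold symmetric. -/
def MFoldSymmetric (m : ℕ) (D : Set R2) : Prop := rot (2 * π / m) '' D = D

/-- Polar coordinates point `r(cos θ, sin θ)`. -/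
def polar (r θ : ℝ) : R2 := pt (r * Real.cos θ) (r * Real.sin θ)

/-- The star-shaped domain with polar graph boundary `1 + u`. -/
def polarDomain (u : ℝ → ℝ) : Set R2 :=
  {x | ∃ r θ : ℝ, 0 ≤ r ∧ r < 1 + u θ ∧ x = polar r θ}

/-- The polar graph `{(1+u(θ))(cos θ, sin θ)}`. -/
def polarGraph (u : ℝ → ℝ) : Set R2 := {x | ∃ θ : ℝ, x = polar (1 + u θ) θ}

/-- `L^∞` norm of a (continuous periodic) function on the torus. -/
def supNorm (u : ℝ → ℝ) : ℝ := ⨆ θ : ℝ, |u θ|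

/-- The Fraenkel asymmetry. -/
def fraenkel (D : Set R2) : ℝ :=
  sInf (Set.range fun x : R2 =>
    (volume (symmDiff D (Metric.ball x (Real.sqrt ((volume D).toReal / π))))).toReal
      / (volume D).toReal)

/-- Asymmetry with respect to the unit disk centered at the origin. -/
def asym0 (D : Set R2) : ℝ :=
  (volume (symmDiff D (Metric.ball (0 : R2) 1))).toReal / π

/-- The Laplacian in the plane. -/
def lap (p : R2 → ℝ) (x : R2) : ℝ :=
  ∑ i : Fin 2,
    fderiv ℝ (fun y => fderiv ℝ p y (EuclideanSpace.single i 1)) x (EuclideanSpace.single i 1)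

/-- The radial function `g(r) = ℋ¹(∂B_r ∩ D)/(2πr)`, as a function on the plane. -/
def sliceg (D : Set R2) (y : R2) : ℝ :=
  (μH[1] (Metric.sphere (0 : R2) ‖y‖ ∩ D)).toReal / (2 * π * ‖y‖)

/-- Convolution of `f` with the Newtonian potential over the plane. -/
def convN (f : R2 → ℝ) (x : R2) : ℝ := ∫ y, f y * nker (x - y)

/-! ### The logarithmic potential and the dilation inequality -/

lemma lintegral_inv_norm_ball (r : ℝ) (hr : 0 ≤ r) :
    ∫⁻ y in Metric.ball (0 : ℂ) r, ENNReal.ofReal (‖y‖⁻¹) ≤ ENNReal.ofReal (2 * π * r) := by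
  rw [← lintegral_indicator measurableSet_ball, ← Complex.lintegral_comp_polarCoord_symm]
  calc _ ≤ ∫⁻ p in polarCoord.target, (Ioo (0:ℝ) r ×ˢ Ioo (-π) π).indicator 1 p := by
        refine setLIntegral_mono' polarCoord.open_target.measurableSet fun p hp => ?_
        simp only [polarCoord_target, mem_prod, mem_Ioi] at hp
        by_cases h : Complex.polarCoord.symm p ∈ Metric.ball (0 : ℂ) r
        · have h' := h
          rw [mem_ball_zero_iff, Complex.norm_polarCoord_symm, abs_of_pos hp.1] at h'
          rw [indicator_of_mem h, indicator_of_mem (by exact ⟨⟨hp.1, h'⟩, hp.2⟩),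
            Complex.norm_polarCoord_symm, abs_of_pos hp.1, smul_eq_mul,
            ← ENNReal.ofReal_mul hp.1.le, mul_inv_cancel₀ hp.1.ne']
          simp
        · rw [indicator_of_notMem h]; simp
    _ ≤ ∫⁻ p, (Ioo (0:ℝ) r ×ˢ Ioo (-π) π).indicator 1 p := setLIntegral_le_lintegral _ _
    _ = _ := by
        rw [lintegral_indicator_one (measurableSet_Ioo.prod measurableSet_Ioo),
          Measure.volume_eq_prod, Measure.prod_prod, Real.volume_Ioo, Real.volume_Ioo,
          ← ENNReal.ofReal_mul (by linarith)]
        congr 1; ring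

/-- The singular kernel `1 / |x - y|` is integrable: the set lies in a ball of radius 4 about `x`. -/
lemma lintegral_inv_norm_sub {A : Set ℂ} (hA : A ⊆ Metric.ball 0 2) {x : ℂ}
    (hx : x ∈ Metric.ball (0 : ℂ) 2) :
    ∫⁻ y in A, ENNReal.ofReal (‖x - y‖⁻¹) ≤ ENNReal.ofReal (8 * π) := by
  have hsub : A ⊆ Metric.ball x 4 := fun y hy => by
    have := hA hy
    rw [mem_ball_zero_iff] at this hx
    rw [Metric.mem_ball, dist_eq_norm]
    linarith [norm_sub_le y x]
  calc _ ≤ ∫⁻ y in Metric.ball x 4, ENNReal.ofReal (‖x - y‖⁻¹) :=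
        lintegral_mono_set hsub
    _ = ∫⁻ y in Metric.ball (0:ℂ) 4, ENNReal.ofReal (‖y‖⁻¹) := by
        rw [← lintegral_indicator measurableSet_ball, ← lintegral_indicator measurableSet_ball,
          ← lintegral_sub_left_eq_self _ x]
        congr 1; ext y
        simp only [indicator, Metric.mem_ball, dist_eq_norm, sub_zero]
        rw [sub_sub_cancel, sub_sub_cancel_left, norm_neg]
    _ ≤ _ := (lintegral_inv_norm_ball 4 (by norm_num)).trans (by
        apply ENNReal.ofReal_le_ofReal; linarith [pi_pos])

lemma integrableOn_inv_norm_sub {A : Set ℂ} (hA : A ⊆ Metric.ball 0 2) {x : ℂ}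
    (hx : x ∈ Metric.ball (0 : ℂ) 2) : IntegrableOn (fun y => ‖x - y‖⁻¹) A := by
  refine ⟨by fun_prop, ?_⟩
  rw [hasFiniteIntegral_iff_ofReal (Filter.Eventually.of_forall fun y => by positivity)]
  exact (lintegral_inv_norm_sub hA hx).trans_lt ENNReal.ofReal_lt_top

lemma integral_inv_norm_sub_le {A : Set ℂ} (hA : A ⊆ Metric.ball 0 2) {x : ℂ}
    (hx : x ∈ Metric.ball (0 : ℂ) 2) : ∫ y in A, ‖x - y‖⁻¹ ≤ 8 * π := by
  rw [integral_eq_lintegral_of_nonneg_ae (Filter.Eventually.of_forall fun y => by positivity)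
    (by fun_prop)]
  exact ENNReal.toReal_le_of_le_ofReal (by positivity) (lintegral_inv_norm_sub hA hx)

lemma volume_lt_top_of_subset_ball {A : Set ℂ} (hA : A ⊆ Metric.ball 0 2) : volume A < ⊤ :=
  (measure_mono hA).trans_lt measure_ball_lt_top

lemma abs_log_le (t : ℝ) (ht : 0 ≤ t) : |Real.log t| ≤ t + t⁻¹ := by
  rcases ht.eq_or_lt with rfl | ht
  · simp
  rw [abs_le]
  constructor
  · have := Real.log_le_sub_one_of_pos (inv_pos.2 ht)
    rw [Real.log_inv] at this; linarith
  · have := Real.log_le_sub_one_of_pos ht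
    have := inv_pos.2 ht
    linarith

lemma abs_log_norm_sub_le {x y : ℂ} (hx : x ∈ Metric.ball (0 : ℂ) 2)
    (hy : y ∈ Metric.ball (0 : ℂ) 2) : |Real.log ‖x - y‖| ≤ 4 + ‖x - y‖⁻¹ := by
  rw [mem_ball_zero_iff] at hx hy
  refine (abs_log_le _ (norm_nonneg _)).trans ?_
  linarith [norm_sub_le x y]

lemma integrableOn_log {A : Set ℂ} (hA : A ⊆ Metric.ball 0 2) (hm : MeasurableSet A) {x : ℂ}
    (hx : x ∈ Metric.ball (0 : ℂ) 2) : IntegrableOn (fun y => Real.log ‖x - y‖) A := by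
  have : IsFiniteMeasure (volume.restrict A) := ⟨by simpa using volume_lt_top_of_subset_ball hA⟩
  refine Integrable.mono' ((integrable_const (4:ℝ)).add (integrableOn_inv_norm_sub hA hx))
    (Real.measurable_log.comp (by fun_prop)).aestronglyMeasurable ?_
  filter_upwards [ae_restrict_mem hm] with y hy
  exact abs_log_norm_sub_le hx (hA hy)

lemma integrable_log_prod {A B : Set ℂ} (hA : A ⊆ Metric.ball 0 2) (hm : MeasurableSet A)
    (hB : B ⊆ Metric.ball 0 2) (hmB : MeasurableSet B) :
    Integrable (fun p : ℂ × ℂ => Real.log ‖p.1 - p.2‖)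
      ((volume.restrict A).prod (volume.restrict B)) := by
  have : IsFiniteMeasure (volume.restrict A) := ⟨by simpa using volume_lt_top_of_subset_ball hA⟩
  have : IsFiniteMeasure (volume.restrict B) := ⟨by simpa using volume_lt_top_of_subset_ball hB⟩
  have hmeas : AEStronglyMeasurable (fun p : ℂ × ℂ => Real.log ‖p.1 - p.2‖)
      ((volume.restrict A).prod (volume.restrict B)) :=
    (Real.measurable_log.comp (by fun_prop)).aestronglyMeasurable
  rw [integrable_prod_iff hmeas]
  constructor
  · filter_upwards [ae_restrict_mem hm] with x hx
    exact integrableOn_log hB hmB (hA hx)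
  · refine Integrable.mono' (integrable_const ((∫ y in B, (4:ℝ)) + 8 * π))
      (hmeas.norm.integral_prod_right') ?_
    filter_upwards [ae_restrict_mem hm] with x hx
    rw [Real.norm_of_nonneg (by positivity)]
    have h1 : ∫ y in B, ‖Real.log ‖x - y‖‖ ≤ ∫ y in B, (4 + ‖x - y‖⁻¹) := by
      refine setIntegral_mono_on (integrableOn_log hB hmB (hA hx)).norm
        ((integrable_const (4:ℝ)).add (integrableOn_inv_norm_sub hB (hA hx))) hmB fun y hy => ?_
      exact abs_log_norm_sub_le (hA hx) (hB hy)
    rw [integral_add (integrable_const (4:ℝ)) (integrableOn_inv_norm_sub hB (hA hx))] at h1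
    exact h1.trans (add_le_add_right (integral_inv_norm_sub_le hB (hA hx)) _)

/-- The logarithmic potential of (the uniform mass on) a planar set; it is `2π` times the
Newtonian potential of the set. -/
def logPot (A : Set ℂ) (x : ℂ) : ℝ := ∫ y in A, Real.log ‖x - y‖

lemma integrableOn_logPot {A B : Set ℂ} (hA : A ⊆ Metric.ball 0 2) (hm : MeasurableSet A)
    (hB : B ⊆ Metric.ball 0 2) (hmB : MeasurableSet B) : IntegrableOn (logPot B) A :=
  (integrable_log_prod hA hm hB hmB).integral_prod_left

lemma integral_logPot_comm {A B : Set ℂ} (hA : A ⊆ Metric.ball 0 2) (hm : MeasurableSet A)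
    (hB : B ⊆ Metric.ball 0 2) (hmB : MeasurableSet B) :
    ∫ x in A, logPot B x = ∫ x in B, logPot A x := by
  unfold logPot
  rw [integral_integral_swap (integrable_log_prod hA hm hB hmB)]
  simp_rw [norm_sub_rev]

/-- The potential is Lipschitz: `log t - log t' ≤ (t - t') / t'`, and `∫_A 1 / |x' - y| dy ≤ 8π`. -/
lemma logPot_sub_le {A : Set ℂ} (hA : A ⊆ Metric.ball 0 2) (hm : MeasurableSet A) {x x' : ℂ}
    (hx : x ∈ Metric.ball (0 : ℂ) 2) (hx' : x' ∈ Metric.ball (0 : ℂ) 2) :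
    logPot A x - logPot A x' ≤ 8 * π * ‖x - x'‖ := by
  unfold logPot
  rw [← integral_sub (integrableOn_log hA hm hx) (integrableOn_log hA hm hx')]
  calc _ ≤ ∫ y in A, ‖x - x'‖ * ‖x' - y‖⁻¹ := by
        refine integral_mono_ae ((integrableOn_log hA hm hx).sub (integrableOn_log hA hm hx'))
          ((integrableOn_inv_norm_sub hA hx').const_mul _) ?_
        have h1 : ∀ᵐ y ∂(volume.restrict A), y ≠ x := by
          exact ae_restrict_of_ae (Measure.ae_ne volume x)
        have h2 : ∀ᵐ y ∂(volume.restrict A), y ≠ x' := by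
          exact ae_restrict_of_ae (Measure.ae_ne volume x')
        filter_upwards [h1, h2] with y hy hy'
        have p1 : 0 < ‖x - y‖ := norm_pos_iff.2 (sub_ne_zero.2 hy.symm)
        have p2 : 0 < ‖x' - y‖ := norm_pos_iff.2 (sub_ne_zero.2 hy'.symm)
        show Real.log ‖x - y‖ - Real.log ‖x' - y‖ ≤ _
        rw [← Real.log_div p1.ne' p2.ne']
        refine (Real.log_le_sub_one_of_pos (div_pos p1 p2)).trans ?_
        rw [← div_eq_mul_inv, div_sub_one p2.ne']
        gcongr
        have := norm_sub_norm_le (x - y) (x' - y)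
        simpa using this
    _ ≤ _ := by
        rw [integral_const_mul, mul_comm]
        exact mul_le_mul_of_nonneg_right (integral_inv_norm_sub_le hA hx') (norm_nonneg _)

/-- The potential of a set of small measure is not very negative: `-log t ≤ K + e⁻ᴷ/t`. -/
lemma neg_le_logPot {A : Set ℂ} (hA : A ⊆ Metric.ball 0 2) (hm : MeasurableSet A) {x : ℂ}
    (hx : x ∈ Metric.ball (0 : ℂ) 2) {K : ℝ} (hK : 0 ≤ K) :
    -(K * volume.real A + Real.exp (-K) * (8 * π)) ≤ logPot A x := by
  have : IsFiniteMeasure (volume.restrict A) := ⟨by simpa using volume_lt_top_of_subset_ball hA⟩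
  have h : ∫ y in A, (-K + -(Real.exp (-K)) * ‖x - y‖⁻¹) ≤ logPot A x := by
    refine integral_mono ((integrable_const _).add
      ((integrableOn_inv_norm_sub hA hx).const_mul _)) (integrableOn_log hA hm hx) fun y => ?_
    show -K + -(Real.exp (-K)) * ‖x - y‖⁻¹ ≤ Real.log ‖x - y‖
    rcases (norm_nonneg (x - y)).eq_or_lt with h0 | h0
    · rw [← h0]; simp [hK]
    have := Real.log_le_sub_one_of_pos (x := Real.exp (-K) * ‖x - y‖⁻¹) (by positivity)
    rw [Real.log_mul (Real.exp_pos _).ne' (by positivity), Real.log_exp, Real.log_inv] at this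
    linarith
  rw [integral_add (integrable_const _) ((integrableOn_inv_norm_sub hA hx).const_mul _),
    integral_const_mul] at h
  simp only [integral_const, measureReal_restrict_apply_univ, smul_eq_mul] at h
  have h2 := mul_le_mul_of_nonneg_left (integral_inv_norm_sub_le hA hx) (Real.exp_pos (-K)).le
  linarith

open scoped Pointwise in
lemma logPot_smul {D : Set ℂ} (hD : D ⊆ Metric.ball 0 2) (hm : MeasurableSet D) {x : ℂ}
    (hx : x ∈ Metric.ball (0 : ℂ) 2) {l : ℝ} (hl : 0 < l) :
    logPot (l • D) (l • x) = l ^ 2 * (logPot D x + Real.log l * volume.real D) := by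
  have : IsFiniteMeasure (volume.restrict D) := ⟨by simpa using volume_lt_top_of_subset_ball hD⟩
  have h := Measure.setIntegral_comp_smul_of_pos volume (fun y => Real.log ‖l • x - y‖) D hl
  rw [Complex.finrank_real_complex, smul_eq_mul, eq_inv_mul_iff_mul_eq₀ (by positivity)] at h
  unfold logPot
  rw [← h]
  congr 1
  have h1 : ∀ᵐ y ∂(volume.restrict D), y ≠ x := by
    exact ae_restrict_of_ae (Measure.ae_ne volume x)
  calc _ = ∫ y in D, (Real.log ‖x - y‖ + Real.log l) := by
        refine integral_congr_ae ?_
        filter_upwards [h1] with y hy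
        rw [← smul_sub, norm_smul, Real.norm_of_nonneg hl.le, Real.log_mul hl.ne'
          (norm_ne_zero_iff.2 (sub_ne_zero.2 hy.symm)), add_comm]
    _ = _ := by
        rw [integral_add (integrableOn_log hD hm hx) (integrable_const _)]
        simp [mul_comm]

open scoped Pointwise in
lemma energy_smul {D : Set ℂ} (hD : D ⊆ Metric.ball 0 2) (hm : MeasurableSet D)
    {l : ℝ} (hl : 0 < l) :
    ∫ x in l • D, logPot (l • D) x
      = l ^ 4 * ((∫ x in D, logPot D x) + Real.log l * volume.real D ^ 2) := by
  have : IsFiniteMeasure (volume.restrict D) := ⟨by simpa using volume_lt_top_of_subset_ball hD⟩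
  have h := Measure.setIntegral_comp_smul_of_pos volume (logPot (l • D)) D hl
  rw [Complex.finrank_real_complex, smul_eq_mul, eq_inv_mul_iff_mul_eq₀ (by positivity)] at h
  rw [← h, setIntegral_congr_fun hm (fun x hx => logPot_smul hD hm (hD hx) hl),
    integral_const_mul, integral_add (integrableOn_logPot hD hm hD hm) (integrable_const _)]
  simp only [integral_const, measureReal_restrict_apply_univ, smul_eq_mul]
  ring

lemma energy_union {D A : Set ℂ} (hD : D ⊆ Metric.ball 0 2) (hm : MeasurableSet D)
    (hA : A ⊆ Metric.ball 0 2) (hmA : MeasurableSet A) (hd : Disjoint D A) :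
    ∫ x in D ∪ A, logPot (D ∪ A) x = (∫ x in D, logPot D x) + 2 * (∫ x in A, logPot D x)
      + ∫ x in A, logPot A x := by
  have hU : D ∪ A ⊆ Metric.ball 0 2 := union_subset hD hA
  have h1 : ∀ x ∈ D ∪ A, logPot (D ∪ A) x = logPot D x + logPot A x := fun x hx =>
    setIntegral_union hd hmA (integrableOn_log hD hm (hU hx)) (integrableOn_log hA hmA (hU hx))
  rw [setIntegral_congr_fun (hm.union hmA) h1,
    integral_add (integrableOn_logPot hU (hm.union hmA) hD hm)
      (integrableOn_logPot hU (hm.union hmA) hA hmA),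
    setIntegral_union hd hmA (integrableOn_logPot hD hm hD hm) (integrableOn_logPot hA hmA hD hm),
    setIntegral_union hd hmA (integrableOn_logPot hD hm hA hmA) (integrableOn_logPot hA hmA hA hmA),
    integral_logPot_comm hD hm hA hmA]
  ring

/-- One-sided first order condition at the point `1`. -/
lemma deriv_nonneg_of_right {f : ℝ → ℝ} {f' b : ℝ} (hf : HasDerivAt f f' 1) (h1 : f 1 = 0)
    (hb : 1 < b) (h : ∀ x, 1 < x → x ≤ b → 0 ≤ f x) : 0 ≤ f' := by
  have ht := (hasDerivAt_iff_tendsto_slope.1 hf).mono_left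
    (nhdsWithin_mono 1 (fun x (hx : x ∈ Ioi (1:ℝ)) => ne_of_gt hx))
  refine ge_of_tendsto ht ?_
  filter_upwards [Ioc_mem_nhdsGT hb] with x hx
  rw [slope_def_field, h1, sub_zero]
  exact div_nonneg (h x hx.1 hx.2) (by linarith [hx.1])

open scoped Pointwise in
/-- The dilation inequality for the logarithmic energy `I(D)`. Dilating `D` by `l` multiplies the
energy by `l⁴` and adds `l⁴ |D|² log l`; on the other hand, to first order in `l - 1` the energy
changes by twice the integral of the potential over the thin shell `lD \ D`, where the potential
is close to its boundary values `c + w |x|²`. -/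
lemma energy_ineq {D : Set ℂ} (hD : D ⊆ Metric.closedBall 0 (3/2)) (hm : MeasurableSet D)
    (hvol : volume.real D = π) (c w : ℝ) (hstar : ∀ l : ℝ, 1 < l → D ⊆ l • D)
    (hb : ∀ l : ℝ, 1 < l → ∀ x ∈ l • D, x ∉ D →
      ∃ x' : ℂ, ‖x - x'‖ ≤ 2 * (l - 1) ∧ ‖x'‖ ≤ ‖x‖ ∧ logPot D x' = c + w * ‖x'‖ ^ 2) :
    4 * π * c + 8 * w * (∫ x in D, ‖x‖ ^ 2) ≤ 4 * (∫ x in D, logPot D x) + π ^ 2 := by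
  set I := ∫ x in D, logPot D x with hI
  set J := ∫ x in D, ‖x‖ ^ 2 with hJ
  have hD2 : D ⊆ Metric.ball 0 2 := fun x hx => by
    have := hD hx
    rw [mem_closedBall_zero_iff] at this
    rw [mem_ball_zero_iff]; linarith
  have hπ := pi_pos
  set M : ℝ := 16 * π + 8 * |w| with hM
  have key : ∀ K : ℝ, 0 ≤ K → ∀ l : ℝ, 1 < l → l ≤ 5/4 →
      0 ≤ (l ^ 4 * (I + Real.log l * π ^ 2) - I - 2 * (c * ((l^2-1) * π) + w * ((l^4-1) * J)))
        + (l^2-1) * π * (2 * M * (l - 1) + K * ((l^2-1) * π) + Real.exp (-K) * (8 * π)) := by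
    intro K hK l hl hl'
    have hlD : l • D ⊆ Metric.ball 0 2 := by
      rintro _ ⟨x, hx, rfl⟩
      have := hD hx
      rw [mem_closedBall_zero_iff] at this
      rw [mem_ball_zero_iff]
      simp only [norm_smul, Real.norm_of_nonneg (by linarith : 0 ≤ l)]
      nlinarith [norm_nonneg x]
    have hlm : MeasurableSet (l • D) := hm.const_smul_of_ne_zero (by linarith)
    set A := (l • D) \ D with hA
    have hA2 : A ⊆ Metric.ball 0 2 := sdiff_subset.trans hlD
    have hmA : MeasurableSet A := hlm.diff hm
    have hU : D ∪ A = l • D := union_sdiff_cancel (hstar l hl)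
    have finA : IsFiniteMeasure (volume.restrict A) :=
      ⟨by simpa using volume_lt_top_of_subset_ball hA2⟩
    have hvolA : volume.real A = (l^2-1) * π := by
      rw [hA, measureReal_sdiff (hstar l hl) hm (volume_lt_top_of_subset_ball hlD).ne, hvol,
        Measure.real, Measure.addHaar_smul, ENNReal.toReal_mul, Complex.finrank_real_complex,
        ENNReal.toReal_ofReal (by positivity), abs_of_nonneg (by positivity)]
      rw [Measure.real] at hvol; rw [hvol]; ring
    have hsqi : ∀ B : Set ℂ, B ⊆ Metric.ball 0 2 → MeasurableSet B →
        IntegrableOn (fun x : ℂ => ‖x‖^2) B := by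
      intro B hB hmB
      have : IsFiniteMeasure (volume.restrict B) :=
        ⟨by simpa using volume_lt_top_of_subset_ball hB⟩
      refine Integrable.mono' (integrable_const (4:ℝ)) (by fun_prop) ?_
      filter_upwards [ae_restrict_mem hmB] with y hy
      have := hB hy
      rw [mem_ball_zero_iff] at this
      rw [Real.norm_of_nonneg (by positivity)]
      nlinarith [norm_nonneg y]
    have hJA : ∫ x in A, ‖x‖^2 = (l^4-1) * J := by
      rw [hA, setIntegral_sdiff hm (hsqi _ hlD hlm) (hstar l hl)]
      have h := Measure.setIntegral_comp_smul_of_pos volume (fun x : ℂ => ‖x‖^2) D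
        (by linarith : 0 < l)
      rw [Complex.finrank_real_complex, smul_eq_mul, eq_inv_mul_iff_mul_eq₀ (by positivity)] at h
      rw [← h]
      simp only [norm_smul, mul_pow, integral_const_mul, Real.norm_eq_abs, sq_abs]
      ring
    have h1 := energy_union hD2 hm hA2 hmA disjoint_sdiff_right
    rw [hU, energy_smul hD2 hm (by linarith), hvol] at h1
    have h2 : c * ((l^2-1) * π) + w * ((l^4-1) * J) - M * (l-1) * ((l^2-1)*π)
        ≤ ∫ x in A, logPot D x := by
      have e : ∫ x in A, ((c - M * (l-1)) + w * ‖x‖^2) ≤ ∫ x in A, logPot D x := by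
        refine setIntegral_mono_on ((integrable_const _).add ((hsqi A hA2 hmA).const_mul w))
          (integrableOn_logPot hA2 hmA hD2 hm) hmA fun x hx => ?_
        obtain ⟨x', hx1, hx2, hx3⟩ := hb l hl x hx.1 hx.2
        have hxb := hA2 hx
        have hxn := mem_ball_zero_iff.1 hxb
        have hx'b : x' ∈ Metric.ball (0:ℂ) 2 := mem_ball_zero_iff.2 (by linarith)
        have hlip := logPot_sub_le hD2 hm hx'b hxb
        rw [norm_sub_rev] at hlip
        have h3 : ‖x‖ - ‖x'‖ ≤ 2 * (l-1) := (norm_sub_norm_le x x').trans hx1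
        have h4 : ‖x‖^2 - ‖x'‖^2 ≤ 8 * (l-1) := by nlinarith [norm_nonneg x, norm_nonneg x']
        have h5 : 0 ≤ ‖x‖^2 - ‖x'‖^2 := by nlinarith [norm_nonneg x, norm_nonneg x']
        have h6 : w * (‖x‖^2 - ‖x'‖^2) ≤ |w| * (8 * (l-1)) :=
          mul_le_mul (le_abs_self w) h4 h5 (abs_nonneg w)
        have h7 : 8 * π * ‖x - x'‖ ≤ 8 * π * (2 * (l-1)) := by gcongr
        rw [hM]
        linarith
      rw [integral_add (integrable_const _) ((hsqi A hA2 hmA).const_mul w), integral_const_mul,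
        hJA] at e
      simp only [integral_const, measureReal_restrict_apply_univ, smul_eq_mul, hvolA] at e
      linarith
    have h3 : -((l^2-1) * π * (K * ((l^2-1) * π) + Real.exp (-K) * (8 * π)))
        ≤ ∫ x in A, logPot A x := by
      have e : ∫ x in A, (-(K * volume.real A + Real.exp (-K) * (8 * π)))
          ≤ ∫ x in A, logPot A x :=
        setIntegral_mono_on (integrable_const _) (integrableOn_logPot hA2 hmA hA2 hmA) hmA
          fun x hx => neg_le_logPot hA2 hmA (hA2 hx) hK
      simp only [integral_const, measureReal_restrict_apply_univ, smul_eq_mul, hvolA] at e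
      linarith
    linarith
  have hder : ∀ K : ℝ, 0 ≤ K →
      0 ≤ 4 * I + π^2 - 2 * (c * (2 * π) + w * (4 * J)) + 16 * π^2 * Real.exp (-K) := by
    intro K hK
    refine deriv_nonneg_of_right (b := 5/4) (f := fun l => (l ^ 4 * (I + Real.log l * π ^ 2) - I
      - 2 * (c * ((l^2-1) * π) + w * ((l^4-1) * J)))
        + (l^2-1) * π * (2 * M * (l - 1) + K * ((l^2-1) * π) + Real.exp (-K) * (8 * π)))
      ?_ (by simp) (by norm_num) (key K hK)
    have d0 : HasDerivAt (fun l : ℝ => l) 1 1 := hasDerivAt_id' 1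
    have d2 : HasDerivAt (fun l : ℝ => l^2) 2 1 := by simpa using hasDerivAt_pow 2 (1:ℝ)
    have d4 : HasDerivAt (fun l : ℝ => l^4) 4 1 := by simpa using hasDerivAt_pow 4 (1:ℝ)
    have dl : HasDerivAt Real.log 1 1 := by simpa using Real.hasDerivAt_log one_ne_zero
    have D1 := ((d4.mul ((dl.mul_const (π^2)).const_add I)).sub_const I).sub
      ((((((d2.sub_const 1).mul_const π).const_mul c)).add
        (((d4.sub_const 1).mul_const J).const_mul w)).const_mul 2)
    have D2 := ((d2.sub_const 1).mul_const π).mul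
      ((((d0.sub_const 1).const_mul (2 * M)).add (((d2.sub_const 1).mul_const π).const_mul K)).add_const
        (Real.exp (-K) * (8 * π)))
    refine (D1.add D2).congr_deriv ?_
    simp only [Pi.add_apply, Real.log_one]
    ring
  have hlim : Filter.Tendsto (fun K : ℝ => 4 * I + π^2 - 2 * (c * (2 * π) + w * (4 * J))
      + 16 * π^2 * Real.exp (-K)) Filter.atTop
      (nhds (4 * I + π^2 - 2 * (c * (2 * π) + w * (4 * J)) + 16 * π^2 * 0)) :=
    (Real.tendsto_exp_neg_atTop_nhds_zero.const_mul _).const_add _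
  have := ge_of_tendsto hlim (Filter.eventually_atTop.2 ⟨0, hder⟩)
  linarith

/-! ### Potentials of circular arcs -/

/-- `log |ρ - σ e^{ix}|`, written with real functions only. -/
def ell (ρ σ x : ℝ) : ℝ := (1 / 2) * Real.log (ρ ^ 2 + σ ^ 2 - 2 * ρ * σ * Real.cos x)

lemma ell_arg_eq (ρ σ θ τ : ℝ) :
    ‖(ρ : ℂ) * Complex.exp (θ * Complex.I) - σ * Complex.exp (τ * Complex.I)‖ ^ 2
      = ρ ^ 2 + σ ^ 2 - 2 * ρ * σ * Real.cos (θ - τ) := by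
  rw [Complex.sq_norm, Complex.normSq_apply]
  simp only [Complex.exp_mul_I, Complex.sub_re, Complex.sub_im, Complex.mul_re, Complex.mul_im,
    Complex.add_re, Complex.add_im, Complex.ofReal_re, Complex.ofReal_im, Complex.I_re,
    Complex.I_im, ← Complex.ofReal_cos, ← Complex.ofReal_sin]
  rw [Real.cos_sub]
  nlinarith [Real.sin_sq_add_cos_sq θ, Real.sin_sq_add_cos_sq τ]

lemma log_norm_eq_ell (ρ σ θ τ : ℝ) :
    Real.log ‖(ρ : ℂ) * Complex.exp (θ * Complex.I) - σ * Complex.exp (τ * Complex.I)‖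
      = ell ρ σ (θ - τ) := by
  rw [ell, ← ell_arg_eq, Real.log_pow]; push_cast; ring

lemma ell_neg (ρ σ x : ℝ) : ell ρ σ (-x) = ell ρ σ x := by simp [ell]

lemma ell_periodic (ρ σ : ℝ) : Function.Periodic (ell ρ σ) (2 * π) := fun x => by simp [ell]

lemma ell_eq_circle (ρ σ x : ℝ) : ell ρ σ x = Real.log ‖circleMap 0 σ x - ρ‖ := by
  have := log_norm_eq_ell ρ σ 0 x
  simp only [Complex.ofReal_zero, zero_mul, Complex.exp_zero, mul_one, zero_sub, ell_neg] at this
  rw [← this, norm_sub_rev, circleMap_zero]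

lemma ell_intervalIntegrable (ρ σ a b : ℝ) : IntervalIntegrable (ell ρ σ) volume a b := by
  refine (ell_periodic ρ σ).intervalIntegrable (t := 0) (by positivity) ?_ a b
  have h := circleIntegrable_log_norm_sub_const (a := (ρ:ℂ)) (c := 0) σ
  rw [zero_add]
  exact h.congr (fun x _ => (ell_eq_circle ρ σ x).symm)

lemma integral_ell_full {ρ σ : ℝ} (hρ : 0 < ρ) (hσ : 0 < σ) (a : ℝ) :
    ∫ x in a..(a + 2 * π), ell ρ σ x = 2 * π * Real.log (max ρ σ) := by
  rw [(ell_periodic ρ σ).intervalIntegral_add_eq a 0, zero_add]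
  have h := circleAverage_log_norm_sub_const_eq_log_radius_add_posLog (a := (ρ:ℂ)) (c := 0) hσ.ne'
  rw [circleAverage_def, smul_eq_mul, inv_mul_eq_iff_eq_mul₀ (by positivity)] at h
  rw [intervalIntegral.integral_congr (fun x _ => ell_eq_circle ρ σ x), h]
  congr 1
  rw [zero_sub, norm_neg, Complex.norm_real, Real.norm_of_nonneg hρ.le]
  change Real.log σ + max 0 (Real.log (σ⁻¹ * ρ)) = _
  rcases le_total ρ σ with hc | hc
  · rw [max_eq_right hc, max_eq_left, add_zero]
    apply Real.log_nonpos (by positivity)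
    rw [inv_mul_le_iff₀ hσ]; linarith
  · rw [max_eq_left hc, max_eq_right, Real.log_mul (by positivity) hρ.ne', Real.log_inv]
    · ring
    · apply Real.log_nonneg
      rw [inv_mul_eq_div, le_div_iff₀ hσ]; linarith

/-- The integral of `log |ρ e^{iT} - σ e^{iτ}|` over the arc `|τ| < t`. -/
def arcPot (ρ T σ t : ℝ) : ℝ := ∫ τ in (0:ℝ)..t, (ell ρ σ (T - τ) + ell ρ σ (T + τ))

lemma arc_integrable (ρ T σ a b : ℝ) :
    IntervalIntegrable (fun τ => ell ρ σ (T - τ) + ell ρ σ (T + τ)) volume a b := by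
  have h1 := (ell_intervalIntegrable ρ σ (T - a) (T - b)).comp_sub_left T
  have h2 := (ell_intervalIntegrable ρ σ (T + a) (T + b)).comp_add_left T
  simp only [sub_sub_cancel, add_sub_cancel_left] at h1 h2
  exact h1.add h2

lemma arcPot_eq (ρ T σ t : ℝ) : arcPot ρ T σ t = ∫ x in (T - t)..(T + t), ell ρ σ x := by
  have h1 := (ell_intervalIntegrable ρ σ (T - 0) (T - t)).comp_sub_left T
  have h2 := (ell_intervalIntegrable ρ σ (T + 0) (T + t)).comp_add_left T
  simp only [sub_sub_cancel, add_sub_cancel_left] at h1 h2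
  rw [arcPot, intervalIntegral.integral_add h1 h2, intervalIntegral.integral_comp_sub_left,
    intervalIntegral.integral_comp_add_left, sub_zero, add_zero]
  exact intervalIntegral.integral_add_adjacent_intervals (ell_intervalIntegrable _ _ _ _)
    (ell_intervalIntegrable _ _ _ _)

lemma arcPot_pi {ρ σ : ℝ} (hρ : 0 < ρ) (hσ : 0 < σ) (T : ℝ) :
    arcPot ρ T σ π = 2 * π * Real.log (max ρ σ) := by
  rw [arcPot_eq, ← integral_ell_full hρ hσ (T - π)]
  congr 1; ring

lemma ell_arg_nonneg (ρ σ x : ℝ) : 0 ≤ ρ ^ 2 + σ ^ 2 - 2 * ρ * σ * Real.cos x := by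
  have := ell_arg_eq ρ σ x 0
  rw [sub_zero] at this
  rw [← this]; positivity

lemma ell_arg_pos {ρ σ x : ℝ} (hρ : 0 < ρ) (hσ : 0 < σ) (hx : Real.cos x < 1) :
    0 < ρ ^ 2 + σ ^ 2 - 2 * ρ * σ * Real.cos x := by
  have : 0 < ρ * σ := mul_pos hρ hσ
  nlinarith [sq_nonneg (ρ - σ)]

lemma ell_arg_pos' {ρ σ : ℝ} (hρ : 0 < ρ) (hσ : 0 < σ) (hne : ρ ≠ σ) (x : ℝ) :
    0 < ρ ^ 2 + σ ^ 2 - 2 * ρ * σ * Real.cos x := by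
  have h1 : 0 ≤ ρ * σ * (1 - Real.cos x) :=
    mul_nonneg (mul_pos hρ hσ).le (sub_nonneg.2 (Real.cos_le_one x))
  have h2 : 0 < (ρ - σ) ^ 2 := by have := sub_ne_zero.2 hne; positivity
  linarith

lemma ell_le_of_cos {ρ σ x y : ℝ} (hρ : 0 < ρ) (hσ : 0 < σ) (hx : Real.cos x < 1)
    (hxy : Real.cos y ≤ Real.cos x) : ell ρ σ x ≤ ell ρ σ y := by
  have : 0 < ρ * σ := mul_pos hρ hσ
  unfold ell
  have := Real.log_le_log (ell_arg_pos hρ hσ hx)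
    (show ρ ^ 2 + σ ^ 2 - 2 * ρ * σ * Real.cos x ≤ ρ ^ 2 + σ ^ 2 - 2 * ρ * σ * Real.cos y by
      nlinarith)
  linarith

lemma cos_lt_one_of {x : ℝ} (h0 : x ≠ 0) (h1 : |x| < 2 * π) : Real.cos x < 1 := by
  refine lt_of_le_of_ne (Real.cos_le_one x) fun h => h0 ?_
  rw [abs_lt] at h1
  exact (Real.cos_eq_one_iff_of_lt_of_lt h1.1 h1.2).1 h

/-- The potential of the arc `|τ| < t` increases along the half circle `0 ≤ T ≤ π`. -/
lemma arcPot_mono {ρ σ : ℝ} (hρ : 0 < ρ) (hσ : 0 < σ) {T₁ T₂ t : ℝ} (h0 : 0 ≤ T₁) (h12 : T₁ ≤ T₂)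
    (h2 : T₂ ≤ π) (ht0 : 0 ≤ t) (ht : t ≤ π) : arcPot ρ T₁ σ t ≤ arcPot ρ T₂ σ t := by
  have hi := ell_intervalIntegrable ρ σ
  have h1 : arcPot ρ T₂ σ t - arcPot ρ T₁ σ t
      = (∫ x in T₁..T₂, ell ρ σ (x + t)) - ∫ x in T₁..T₂, ell ρ σ (x - t) := by
    rw [arcPot_eq, arcPot_eq, intervalIntegral.integral_comp_add_right,
      intervalIntegral.integral_comp_sub_right,
      intervalIntegral.integral_interval_sub_interval_comm (hi _ _) (hi _ _) (hi _ _),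
      intervalIntegral.integral_symm (T₂ - t), intervalIntegral.integral_symm (T₂ + t)]
    ring
  have h3 : (∫ x in T₁..T₂, ell ρ σ (x - t)) ≤ ∫ x in T₁..T₂, ell ρ σ (x + t) := by
    have i1 := (hi (T₁ - t) (T₂ - t)).comp_sub_right t
    have i2 := (hi (T₁ + t) (T₂ + t)).comp_add_right t
    simp only [sub_add_cancel, add_sub_cancel_right] at i1 i2
    refine intervalIntegral.integral_mono_ae_restrict h12 i1 i2 ?_
    have hne : ∀ᵐ x ∂(volume.restrict (Icc T₁ T₂)), x ≠ t := by
      exact ae_restrict_of_ae (Measure.ae_ne volume t)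
    filter_upwards [ae_restrict_mem measurableSet_Icc, hne] with x hx hxt
    refine ell_le_of_cos hρ hσ (cos_lt_one_of (sub_ne_zero.2 hxt) ?_) ?_
    · rw [abs_lt]; constructor <;> linarith [hx.1, hx.2, pi_pos]
    · rw [Real.cos_add, Real.cos_sub]
      have := Real.sin_nonneg_of_nonneg_of_le_pi (h0.trans hx.1) (hx.2.trans h2)
      have := Real.sin_nonneg_of_nonneg_of_le_pi ht0 ht
      nlinarith
  linarith

/-- Averages of an antitone function over initial segments dominate the full average. -/
lemma initial_average {F : ℝ → ℝ} (hF : AntitoneOn F (Ioo 0 π))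
    (hi : ∀ a b, IntervalIntegrable F volume a b) {t : ℝ} (h0 : 0 ≤ t) (ht : t ≤ π) :
    t * (∫ x in (0:ℝ)..π, F x) ≤ π * ∫ x in (0:ℝ)..t, F x := by
  rcases h0.eq_or_lt with rfl | h0
  · simp
  rcases ht.eq_or_lt with rfl | ht
  · rfl
  have h1 : t * F t ≤ ∫ x in (0:ℝ)..t, F x := by
    have := intervalIntegral.integral_mono_on_of_le_Ioo h0.le
      (intervalIntegrable_const (c := F t)) (hi 0 t)
      (fun x hx => hF ⟨hx.1, hx.2.trans ht⟩ ⟨h0, ht⟩ hx.2.le)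
    simpa using this
  have h2 : ∫ x in t..π, F x ≤ (π - t) * F t := by
    have := intervalIntegral.integral_mono_on_of_le_Ioo ht.le (hi t π)
      (intervalIntegrable_const (c := F t))
      (fun x hx => hF ⟨h0, ht⟩ ⟨h0.trans hx.1, hx.2⟩ hx.1.le)
    simpa using this
  rw [← intervalIntegral.integral_add_adjacent_intervals (hi 0 t) (hi t π)]
  nlinarith

/-- At the point `T = π` opposite to the arc, the average of the kernel over the arc is at least its
average over the full circle, which is `log (max ρ σ)`. -/
lemma arcPot_tip {ρ σ : ℝ} (hρ : 0 < ρ) (hσ : 0 < σ) {t : ℝ} (h0 : 0 ≤ t) (ht : t ≤ π) :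
    2 * t * Real.log (max ρ σ) ≤ arcPot ρ π σ t := by
  have h := initial_average (F := fun τ => ell ρ σ (π - τ) + ell ρ σ (π + τ)) ?_
    (arc_integrable ρ π σ) h0 ht
  · have e := arcPot_pi hρ hσ π
    unfold arcPot at e ⊢
    rw [e] at h
    have := pi_pos
    nlinarith
  · intro x hx y hy hxy
    have hc : Real.cos y ≤ Real.cos x := Real.cos_le_cos_of_nonneg_of_le_pi hx.1.le hy.2.le hxy
    have hy1 : -1 < Real.cos y := by
      rw [← Real.cos_pi]; exact Real.cos_lt_cos_of_nonneg_of_le_pi hy.1.le le_rfl hy.2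
    have e1 : ∀ z, Real.cos (π + z) = -Real.cos z := fun z => by rw [add_comm, Real.cos_add_pi]
    refine add_le_add (ell_le_of_cos hρ hσ ?_ ?_) (ell_le_of_cos hρ hσ ?_ ?_) <;>
      simp only [Real.cos_pi_sub, e1] <;> linarith

/-- The slice estimate near the tip: bound the integrand on the complementary arc. -/
lemma arcPot_middle {ρ₀ ρ₁ σ : ℝ} (h0 : 0 < ρ₀) (h1 : 0 < ρ₁) (hσ : ρ₀ < σ)
    (hne : ρ₁ ≠ σ) (T : ℝ) {t : ℝ}
    (ht : t ≤ π) :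
    2 * π * (Real.log (max ρ₁ σ) - Real.log (max ρ₀ σ))
      - 2 * (π - t) * (Real.log 2 + Real.log (max ρ₁ σ) - Real.log (σ - ρ₀))
      ≤ arcPot ρ₁ T σ t - arcPot ρ₀ π σ t := by
  have hσ0 : 0 < σ := h0.trans hσ
  have hmx : 0 < max ρ₁ σ := lt_max_of_lt_left h1
  have up : ∀ x, ell ρ₁ σ x ≤ Real.log 2 + Real.log (max ρ₁ σ) := by
    intro x
    rw [← Real.log_mul two_ne_zero hmx.ne', ell]
    have hle : ρ₁ ^ 2 + σ ^ 2 - 2 * ρ₁ * σ * Real.cos x ≤ (2 * max ρ₁ σ) ^ 2 := by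
      have : 0 < ρ₁ * σ := mul_pos h1 hσ0
      have a := le_max_left ρ₁ σ
      have b := le_max_right ρ₁ σ
      nlinarith [Real.neg_one_le_cos x]
    have := Real.log_le_log (ell_arg_pos' h1 hσ0 hne x) hle
    rw [Real.log_pow] at this
    push_cast at this; linarith
  have lo : ∀ x, Real.log (σ - ρ₀) ≤ ell ρ₀ σ x := by
    intro x
    have : (σ - ρ₀) ^ 2 ≤ ρ₀ ^ 2 + σ ^ 2 - 2 * ρ₀ * σ * Real.cos x := by
      have : 0 < ρ₀ * σ := mul_pos h0 hσ0
      nlinarith [Real.cos_le_one x]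
    have := Real.log_le_log (by have := sub_pos.2 hσ; positivity) this
    rw [Real.log_pow] at this
    rw [ell]; push_cast at this; linarith
  have s1 : arcPot ρ₁ T σ t = 2 * π * Real.log (max ρ₁ σ)
      - ∫ τ in t..π, (ell ρ₁ σ (T - τ) + ell ρ₁ σ (T + τ)) := by
    rw [← arcPot_pi h1 hσ0 T, arcPot, arcPot, eq_sub_iff_add_eq]
    exact intervalIntegral.integral_add_adjacent_intervals (arc_integrable _ _ _ _ _)
      (arc_integrable _ _ _ _ _)
  have s0 : arcPot ρ₀ π σ t = 2 * π * Real.log (max ρ₀ σ)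
      - ∫ τ in t..π, (ell ρ₀ σ (π - τ) + ell ρ₀ σ (π + τ)) := by
    rw [← arcPot_pi h0 hσ0 π, arcPot, arcPot, eq_sub_iff_add_eq]
    exact intervalIntegral.integral_add_adjacent_intervals (arc_integrable _ _ _ _ _)
      (arc_integrable _ _ _ _ _)
  have b1 : ∫ τ in t..π, (ell ρ₁ σ (T - τ) + ell ρ₁ σ (T + τ))
      ≤ (π - t) * (2 * (Real.log 2 + Real.log (max ρ₁ σ))) := by
    have := intervalIntegral.integral_mono_on ht (arc_integrable ρ₁ T σ t π)
      (intervalIntegrable_const (c := 2 * (Real.log 2 + Real.log (max ρ₁ σ))))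
      (fun x _ => by linarith [up (T - x), up (T + x)])
    rw [intervalIntegral.integral_const, smul_eq_mul] at this
    exact this
  have b0 : (π - t) * (2 * Real.log (σ - ρ₀))
      ≤ ∫ τ in t..π, (ell ρ₀ σ (π - τ) + ell ρ₀ σ (π + τ)) := by
    have := intervalIntegral.integral_mono_on ht
      (intervalIntegrable_const (c := 2 * Real.log (σ - ρ₀))) (arc_integrable ρ₀ π σ t π)
      (fun x _ => by linarith [lo (π - x), lo (π + x)])
    rw [intervalIntegral.integral_const, smul_eq_mul] at this
    exact this
  rw [s1, s0]
  linarith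

/-- Polynomial inequality behind the monotonicity of the far slices. -/
lemma far_poly {p q k c d : ℝ} (hp : 0 < p) (hp1 : p ≤ 1/16) (hq : 0 < q) (hq1 : q ≤ p/16)
    (hk : 1/2 ≤ k) (hk1 : k ≤ 1) (hd : -1 ≤ d) (hdc : d ≤ c) (hc : c ≤ 1) :
    ((1+p^2)^2 + 4*p*(1+p^2)*k*d + 4*p^2*(d^2-(1-k^2))) * (1+q^2+2*q*c)^2
    ≤ ((1+p^2)^2 + 4*p*(1+p^2)*k*c + 4*p^2*(c^2-(1-k^2))) * (1+q^2+2*q*d)^2 := by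
  set P := (1+p^2)^2 + 4*p*(1+p^2)*k*d + 4*p^2*(d^2-(1-k^2)) with hP
  have hA : p ≤ 4*p*(1+p^2)*k + 4*p^2*(c+d) := by
    have : 4*p*(1/2) ≤ 4*p*(1+p^2)*k := by
      have : 1/2 ≤ (1+p^2)*k := by nlinarith [sq_nonneg p]
      nlinarith
    nlinarith
  have hPu : P ≤ 3/2 := by
    have h1 : (1+p^2) * k * d ≤ 1 + p^2 := by
      have : k * d ≤ 1 := by nlinarith
      nlinarith [sq_nonneg p]
    have h2 : d^2 - (1-k^2) ≤ 1 := by nlinarith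
    have h3 : p^2 ≤ 1/256 := by nlinarith
    rw [hP]
    nlinarith [sq_nonneg p]
  have hWd : 7/8 ≤ (1+q^2+2*q*d)^2 := by
    have : 15/16 ≤ 1+q^2+2*q*d := by nlinarith [sq_nonneg q]
    nlinarith
  have hWs : (1+q^2+2*q*c) + (1+q^2+2*q*d) ≤ 3 := by nlinarith [sq_nonneg q]
  have hWs0 : 0 ≤ (1+q^2+2*q*c) + (1+q^2+2*q*d) := by nlinarith [sq_nonneg q]
  have key : P * (2*q*((1+q^2+2*q*c) + (1+q^2+2*q*d)))
      ≤ (4*p*(1+p^2)*k + 4*p^2*(c+d)) * (1+q^2+2*q*d)^2 := by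
    have a1 : 2*q*((1+q^2+2*q*c) + (1+q^2+2*q*d)) ≤ 6 * q := by nlinarith
    have a2 : P * (2*q*((1+q^2+2*q*c) + (1+q^2+2*q*d))) ≤ 3/2 * (6*q) :=
      mul_le_mul hPu a1 (by positivity) (by norm_num)
    have a3 : p * (7/8) ≤ (4*p*(1+p^2)*k + 4*p^2*(c+d)) * (1+q^2+2*q*d)^2 :=
      mul_le_mul hA hWd (by norm_num) (hp.le.trans hA)
    linarith
  have := mul_le_mul_of_nonneg_left key (sub_nonneg.2 hdc)
  nlinarith

set_option maxHeartbeats 1000000 in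
/-- A slice whose radius is far above those of two points near the spike (all radii being `m`-th
powers): its potential at the upper point, at an angle `T` with `cos T ≤ -1/2`,
is at least the one at the tip. -/
lemma arcPot_far {ρ₀ ρ₁ σ T t : ℝ} (h0 : 0 < ρ₀) (h01 : 16 * ρ₀ ≤ ρ₁) (h1 : 16 * ρ₁ ≤ σ)
    (hT : Real.cos T ≤ -(1/2)) (ht0 : 0 ≤ t) (ht : t ≤ π) :
    arcPot ρ₀ π σ t ≤ arcPot ρ₁ T σ t := by
  have hρ₁ : 0 < ρ₁ := by linarith
  have hσ : 0 < σ := by linarith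
  have e1 := arcPot_pi hρ₁ hσ T
  have e0 := arcPot_pi h0 hσ π
  rw [max_eq_right (by linarith)] at e1 e0
  have h := initial_average (F := fun τ => (ell ρ₁ σ (T - τ) + ell ρ₁ σ (T + τ))
      - (ell ρ₀ σ (π - τ) + ell ρ₀ σ (π + τ))) ?_
    (fun a b => (arc_integrable ρ₁ T σ a b).sub (arc_integrable ρ₀ π σ a b)) ht0 ht
  · rw [intervalIntegral.integral_sub (arc_integrable _ _ _ _ _) (arc_integrable _ _ _ _ _),
      intervalIntegral.integral_sub (arc_integrable _ _ _ _ _) (arc_integrable _ _ _ _ _)] at h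
    unfold arcPot at e1 e0 ⊢
    rw [e1, e0, sub_self, mul_zero] at h
    have := nonneg_of_mul_nonneg_right h pi_pos
    linarith
  · intro x hx y hy hxy
    have hc : Real.cos y ≤ Real.cos x := Real.cos_le_cos_of_nonneg_of_le_pi hx.1.le hy.2.le hxy
    obtain ⟨p, hp⟩ : ∃ p, p = ρ₁ / σ := ⟨_, rfl⟩
    obtain ⟨q, hq⟩ : ∃ q, q = ρ₀ / σ := ⟨_, rfl⟩
    have hp' : ρ₁ = p * σ := by rw [hp]; field_simp
    have hq' : ρ₀ = q * σ := by rw [hq]; field_simp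
    have p0 : 0 < p := by rw [hp]; positivity
    have q0 : 0 < q := by rw [hq]; positivity
    have p1 : p ≤ 1/16 := by rw [hp, div_le_iff₀ hσ]; linarith
    have q1 : q ≤ p/16 := by rw [hq, hp, div_div, div_le_div_iff₀ hσ (by positivity)]; nlinarith
    set k := -Real.cos T with hk
    have hpoly := far_poly p0 p1 q0 q1 (show 1/2 ≤ k by linarith)
      (by linarith [Real.neg_one_le_cos T]) (Real.neg_one_le_cos y) hc (Real.cos_le_one x)
    have hs : Real.sin T ^ 2 = 1 - k^2 := by rw [hk]; nlinarith [Real.sin_sq_add_cos_sq T]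
    have argpos : ∀ {ρ z : ℝ}, 0 < ρ → ρ < σ → 0 < ρ ^ 2 + σ ^ 2 - 2 * ρ * σ * Real.cos z := by
      intro ρ z h h'
      exact ell_arg_pos' h hσ h'.ne z
    have prod : ∀ z, (ρ₁ ^ 2 + σ ^ 2 - 2 * ρ₁ * σ * Real.cos (T - z))
        * (ρ₁ ^ 2 + σ ^ 2 - 2 * ρ₁ * σ * Real.cos (T + z))
        = σ^4 * ((1+p^2)^2 + 4*p*(1+p^2)*k*Real.cos z + 4*p^2*(Real.cos z^2-(1-k^2))) := by
      intro z
      rw [Real.cos_sub, Real.cos_add, hp']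
      have hz : Real.sin z ^ 2 = 1 - Real.cos z ^ 2 := by
        nlinarith [Real.sin_sq_add_cos_sq z]
      have hT' : Real.cos T = -k := by rw [hk]; ring
      rw [hT']
      have : (p*σ)^2 + σ^2 - 2*(p*σ)*σ*(-k*Real.cos z + Real.sin T*Real.sin z)
        = σ^2*(1+p^2+2*p*k*Real.cos z - 2*p*(Real.sin T*Real.sin z)) := by ring
      rw [this]
      have : (p*σ)^2 + σ^2 - 2*(p*σ)*σ*(-k*Real.cos z - Real.sin T*Real.sin z)
        = σ^2*(1+p^2+2*p*k*Real.cos z + 2*p*(Real.sin T*Real.sin z)) := by ring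
      rw [this]
      have : (Real.sin T*Real.sin z)^2 = (1-k^2)*(1 - Real.cos z ^ 2) := by rw [mul_pow, hs, hz]
      linear_combination (-4 * σ^4 * p^2) * this
    have q2 : ∀ z, ρ₀ ^ 2 + σ ^ 2 - 2 * ρ₀ * σ * Real.cos (π - z)
        = σ^2 * (1 + q^2 + 2*q*Real.cos z) := by
      intro z; rw [Real.cos_pi_sub, hq']; ring
    have q3 : ∀ z, ρ₀ ^ 2 + σ ^ 2 - 2 * ρ₀ * σ * Real.cos (π + z)
        = σ^2 * (1 + q^2 + 2*q*Real.cos z) := by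
      intro z; rw [add_comm π z, Real.cos_add_pi, hq']; ring
    have wpos : ∀ z, 0 < 1 + q^2 + 2*q*Real.cos z := by
      intro z; nlinarith [Real.neg_one_le_cos z, sq_nonneg q]
    have Ppos : ∀ z, 0 < (1+p^2)^2 + 4*p*(1+p^2)*k*Real.cos z + 4*p^2*(Real.cos z^2-(1-k^2)) := by
      intro z
      have := mul_pos (argpos (z := T - z) hρ₁ (by linarith)) (argpos (z := T + z) hρ₁ (by linarith))
      rw [prod] at this
      exact pos_of_mul_pos_right this (by positivity)
    have val : ∀ z, (ell ρ₁ σ (T - z) + ell ρ₁ σ (T + z)) - (ell ρ₀ σ (π - z) + ell ρ₀ σ (π + z))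
        = 1/2 * (Real.log ((1+p^2)^2 + 4*p*(1+p^2)*k*Real.cos z + 4*p^2*(Real.cos z^2-(1-k^2)))
          - 2 * Real.log (1 + q^2 + 2*q*Real.cos z)) := by
      intro z
      unfold ell
      have e := Real.log_mul (argpos (z := T - z) hρ₁ (by linarith)).ne'
        (argpos (z := T + z) hρ₁ (by linarith)).ne'
      rw [prod, Real.log_mul (by positivity) (Ppos z).ne', Real.log_pow] at e
      rw [q2, q3, Real.log_mul (by positivity) (wpos z).ne', Real.log_pow]
      push_cast at e ⊢
      linarith
    show (ell ρ₁ σ (T - y) + ell ρ₁ σ (T + y)) - (ell ρ₀ σ (π - y) + ell ρ₀ σ (π + y)) ≤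
      (ell ρ₁ σ (T - x) + ell ρ₁ σ (T + x)) - (ell ρ₀ σ (π - x) + ell ρ₀ σ (π + x))
    rw [val, val]
    have hl := Real.log_le_log (mul_pos (Ppos y) (pow_pos (wpos x) 2)) hpoly
    rw [Real.log_mul (Ppos y).ne' (pow_pos (wpos x) 2).ne',
      Real.log_mul (Ppos x).ne' (pow_pos (wpos y) 2).ne', Real.log_pow, Real.log_pow] at hl
    push_cast at hl
    linarith

/-! ### Star-shaped domains and their slices -/

lemma polarSymm_eq (p : ℝ × ℝ) :
    Complex.polarCoord.symm p = (p.1 : ℂ) * Complex.exp (p.2 * Complex.I) := by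
  rw [Complex.polarCoord_symm_apply, Complex.exp_mul_I, Complex.ofReal_cos, Complex.ofReal_sin]

lemma polar_integrable {f : ℂ → ℝ} (hf : Measurable f) (hi : Integrable f) :
    IntegrableOn (fun p : ℝ × ℝ => p.1 * f ((p.1 : ℂ) * Complex.exp (p.2 * Complex.I)))
      (Ioi (0:ℝ) ×ˢ Ioo (-π) π) (volume.prod volume) := by
  refine ⟨(measurable_fst.mul (hf.comp (by fun_prop))).aestronglyMeasurable, ?_⟩
  have h := hi.hasFiniteIntegral
  rw [hasFiniteIntegral_iff_enorm, ← Complex.lintegral_comp_polarCoord_symm] at h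
  rw [hasFiniteIntegral_iff_enorm]
  refine lt_of_le_of_lt (le_of_eq ?_) h
  refine setLIntegral_congr_fun (measurableSet_Ioi.prod measurableSet_Ioo) fun p hp => ?_
  simp only [polarSymm_eq]
  rw [enorm_mul, Real.enorm_of_nonneg (le_of_lt hp.1), smul_eq_mul]

lemma polar_integral {f : ℂ → ℝ} :
    ∫ z, f z = ∫ p in Ioi (0:ℝ) ×ˢ Ioo (-π) π,
      p.1 * f ((p.1 : ℂ) * Complex.exp (p.2 * Complex.I)) ∂(volume.prod volume) := by
  rw [← Complex.integral_comp_polarCoord_symm]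
  simp only [polarSymm_eq, smul_eq_mul]
  rfl

/-- The domain inside the polar graph `1 + u`. -/
def starDom (u : ℝ → ℝ) : Set ℂ := {z | ‖z‖ < 1 + u (Complex.arg z)}

/-- The hypotheses on the profile `u`: it is continuous, even, `2π/m`-periodic,
nonincreasing on half a period, and at most `1/2` in absolute value. -/
structure Prof (m : ℕ) (u : ℝ → ℝ) : Prop where
  hm : 1 ≤ m
  cont : Continuous u
  even : ∀ θ, u (-θ) = u θ
  per : Function.Periodic u (2 * π / m)
  anti : AntitoneOn u (Icc 0 (π / m))
  bd : ∀ θ, |u θ| ≤ 1 / 2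

namespace Prof

variable {m : ℕ} {u : ℝ → ℝ}

lemma mpos (h : Prof m u) : (0:ℝ) < m := by exact_mod_cast h.hm

lemma per2 (h : Prof m u) : Function.Periodic u (2 * π) := by
  have := h.per.nat_mul m
  rwa [mul_div_cancel₀ _ h.mpos.ne'] at this

lemma lo (h : Prof m u) (θ : ℝ) : 1 / 2 ≤ 1 + u θ := by linarith [(abs_le.1 (h.bd θ)).1]
lemma hi (h : Prof m u) (θ : ℝ) : 1 + u θ ≤ 3 / 2 := by linarith [(abs_le.1 (h.bd θ)).2]

lemma u_arg (h : Prof m u) {s : ℝ} (hs : 0 < s) (θ : ℝ) :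
    u (Complex.arg (s * Complex.exp (θ * Complex.I))) = u θ := by
  rw [Complex.exp_mul_I, Complex.arg_mul_cos_add_sin_mul_I_eq_toIocMod hs θ, toIocMod]
  exact h.per2.sub_zsmul_eq _

lemma mem_star (h : Prof m u) {s : ℝ} (hs : 0 ≤ s) (θ : ℝ) :
    (s * Complex.exp (θ * Complex.I) : ℂ) ∈ starDom u ↔ s < 1 + u θ := by
  have hn : ‖(s * Complex.exp (θ * Complex.I) : ℂ)‖ = s := by
    rw [norm_mul, Complex.norm_exp_ofReal_mul_I, mul_one, Complex.norm_real,
      Real.norm_of_nonneg hs]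
  rw [starDom, mem_ofPred_eq, hn]
  rcases hs.eq_or_lt with rfl | hs
  · simp only [(show (0:ℝ) < 1 + u θ by linarith [h.lo θ]), iff_true]
    linarith [h.lo (Complex.arg (((0:ℝ):ℂ) * Complex.exp (θ * Complex.I)))]
  · rw [h.u_arg hs]

lemma measurable_star (h : Prof m u) : MeasurableSet (starDom u) :=
  measurableSet_lt measurable_norm ((h.cont.measurable.comp Complex.measurable_arg).const_add 1)

lemma star_sub (h : Prof m u) : starDom u ⊆ Metric.closedBall 0 (3/2) := fun z hz => by
  rw [mem_closedBall_zero_iff]; exact (le_of_lt hz).trans (h.hi _)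

lemma star_sub' (h : Prof m u) : starDom u ⊆ Metric.ball 0 2 :=
  h.star_sub.trans (Metric.closedBall_subset_ball (by norm_num))

/-- For each radius the slice of the domain is, on half a period, an initial interval. -/
lemma exists_edge (h : Prof m u) : ∃ t : ℝ → ℝ, ∀ s, 0 ≤ t s ∧ t s ≤ π ∧
    (∀ τ, 0 ≤ τ → τ < π → (s < 1 + u (τ / m) ↔ τ < t s)) ∧
    (1 + u (π / m) ≤ s → s ≤ 1 + u 0 → 1 + u (t s / m) = s) ∧ (s < 1 + u (π / m) → t s = π) := by
  have hm := h.mpos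
  have mem : ∀ {τ}, 0 ≤ τ → τ ≤ π → τ / m ∈ Icc (0:ℝ) (π / m) := fun h1 h2 =>
    ⟨by positivity, by gcongr⟩
  have hc : Continuous (fun τ : ℝ => 1 + u (τ / m)) := by
    have := h.cont
    fun_prop
  have : ∀ s, ∃ t, 0 ≤ t ∧ t ≤ π ∧ (∀ τ, 0 ≤ τ → τ < π → (s < 1 + u (τ / m) ↔ τ < t)) ∧
      (1 + u (π / m) ≤ s → s ≤ 1 + u 0 → 1 + u (t / m) = s) ∧ (s < 1 + u (π / m) → t = π) := by
    intro s
    by_cases hp : s < 1 + u (π / m)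
    · refine ⟨π, pi_pos.le, le_rfl, fun τ h1 h2 => ⟨fun _ => h2, fun _ => ?_⟩,
        fun hh => absurd hp hh.not_gt, fun _ => rfl⟩
      have := h.anti (mem h1 h2.le) (mem pi_pos.le le_rfl) (by gcongr)
      linarith
    · push Not at hp
      have hK : IsCompact (Icc 0 π ∩ {τ : ℝ | 1 + u (τ / m) ≤ s}) :=
        isCompact_Icc.inter_right (isClosed_le hc continuous_const)
      obtain ⟨t, ⟨ht, hts⟩, hmin⟩ := hK.exists_isLeast ⟨π, ⟨pi_pos.le, le_rfl⟩, hp⟩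
      simp only [mem_ofPred_eq] at hts
      refine ⟨t, ht.1, ht.2, fun τ h1 h2 => ⟨fun hh => ?_, fun hh => ?_⟩, fun _ h0 => ?_,
        fun hh => absurd hh hp.not_gt⟩
      · by_contra hcon
        have := h.anti (mem ht.1 ht.2) (mem h1 h2.le) (div_le_div_of_nonneg_right (not_lt.1 hcon) hm.le)
        linarith
      · by_contra hcon
        exact absurd (hmin ⟨⟨h1, h2.le⟩, not_lt.1 hcon⟩) hh.not_ge
      · obtain ⟨τ, hτ, hτs⟩ := intermediate_value_Icc' ht.1 hc.continuousOn
          (show s ∈ Icc _ _ from ⟨hts, by simpa using h0⟩)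
        simp only at hτs
        have := hmin ⟨⟨hτ.1, hτ.2.trans ht.2⟩, hτs.le⟩
        rwa [le_antisymm this hτ.2]
  choose t ht using this
  exact ⟨t, ht⟩

/-- The half width, in the variable `mθ`, of the slice of the domain at radius `s`. -/
def edge (h : Prof m u) : ℝ → ℝ := h.exists_edge.choose

lemma edge_nonneg (h : Prof m u) (s : ℝ) : 0 ≤ h.edge s := (h.exists_edge.choose_spec s).1
lemma edge_le (h : Prof m u) (s : ℝ) : h.edge s ≤ π := (h.exists_edge.choose_spec s).2.1
lemma lt_edge (h : Prof m u) (s : ℝ) {τ : ℝ} (h1 : 0 ≤ τ) (h2 : τ < π) :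
    s < 1 + u (τ / m) ↔ τ < h.edge s := (h.exists_edge.choose_spec s).2.2.1 τ h1 h2
lemma u_edge (h : Prof m u) {s : ℝ} (h1 : 1 + u (π / m) ≤ s) (h2 : s ≤ 1 + u 0) :
    1 + u (h.edge s / m) = s := (h.exists_edge.choose_spec s).2.2.2.1 h1 h2
lemma edge_eq_pi (h : Prof m u) {s : ℝ} (h1 : s < 1 + u (π / m)) : h.edge s = π :=
  (h.exists_edge.choose_spec s).2.2.2.2 h1

/-- The profile takes all its values at `T / m`, `0 ≤ T ≤ π`. -/
lemma exists_reduce (h : Prof m u) (θ : ℝ) : ∃ T, 0 ≤ T ∧ T ≤ π ∧ u (T / m) = u θ ∧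
    ∀ ρ σ t, arcPot ρ (m * θ) σ t = arcPot ρ T σ t := by
  have hm := h.mpos
  set k := toIocDiv Real.two_pi_pos (-π) (m * θ)
  have hk : m * θ - k • (2 * π) ∈ Ioc (-π) (-π + 2 * π) := by
    exact toIocMod_mem_Ioc Real.two_pi_pos (-π) (m * θ)
  have hu : u ((m * θ - k • (2 * π)) / m) = u θ := by
    rw [show (m * θ - k • (2 * π)) / m = θ - k • (2 * π / m) by
      simp only [zsmul_eq_mul]; field_simp]
    exact h.per.sub_zsmul_eq k
  have ha : ∀ ρ σ t, arcPot ρ (m * θ) σ t = arcPot ρ (m * θ - k • (2 * π)) σ t := by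
    intro ρ σ t
    unfold arcPot
    refine intervalIntegral.integral_congr fun τ _ => ?_
    rw [show m * θ - k • (2 * π) - τ = (m * θ - τ) - k • (2 * π) by ring,
      show m * θ - k • (2 * π) + τ = (m * θ + τ) - k • (2 * π) by ring,
      (ell_periodic ρ σ).sub_zsmul_eq, (ell_periodic ρ σ).sub_zsmul_eq]
  rcases le_total 0 (m * θ - k • (2 * π)) with h0 | h0
  · exact ⟨_, h0, by linarith [hk.2], hu, ha⟩
  · refine ⟨-(m * θ - k • (2 * π)), by linarith, by linarith [hk.1], by rw [neg_div, h.even, hu],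
      fun ρ σ t => ?_⟩
    rw [ha]
    unfold arcPot
    refine intervalIntegral.integral_congr fun τ _ => ?_
    rw [← ell_neg, ← ell_neg ρ σ (_ + τ), neg_sub', neg_add', add_comm, sub_neg_eq_add]

/-- The radius is smallest at `π / m`. -/
lemma min_le (h : Prof m u) (θ : ℝ) : u (π / m) ≤ u θ := by
  have hm := h.mpos
  obtain ⟨T, h0, h1, h2, -⟩ := h.exists_reduce θ
  rw [← h2]
  exact h.anti ⟨by positivity, by gcongr⟩ ⟨by positivity, le_rfl⟩ (by gcongr)

lemma le_zero (h : Prof m u) (θ : ℝ) : u θ ≤ u 0 := by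
  have hm := h.mpos
  obtain ⟨T, h0, h1, h2, -⟩ := h.exists_reduce θ
  rw [← h2]
  exact h.anti ⟨le_rfl, by positivity⟩ ⟨by positivity, by gcongr⟩ (by positivity)

open Classical in
/-- Integrals over one slice of functions of `mθ`. -/
lemma slice_integral (h : Prof m u) (s : ℝ) {K : ℝ → ℝ} (hK : Function.Periodic K (2 * π))
    (hKi : ∀ a b, IntervalIntegrable K volume a b) :
    ∫ τ in (-π)..π, (if s < 1 + u τ then K (m * τ) else 0)
      = ∫ y in (0:ℝ)..(h.edge s), (K (-y) + K y) := by
  have hm := h.mpos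
  set G : ℝ → ℝ := fun y => if s < 1 + u (y / m) then K y else 0 with hG
  have hGp : Function.Periodic G (2 * π) := fun y => by
    simp only [hG, hK y]
    rw [add_div, h.per]
  have hSm : MeasurableSet {y : ℝ | s < 1 + u (y / m)} := by
    have := h.cont
    exact (isOpen_lt continuous_const (by fun_prop)).measurableSet
  have hGi : ∀ a b, IntervalIntegrable G volume a b := fun a b => by
    have : G = {y : ℝ | s < 1 + u (y / m)}.indicator K := by
      ext y; simp [hG, indicator]
    rw [this]
    exact ⟨(hKi a b).1.indicator hSm, (hKi a b).2.indicator hSm⟩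
  have e1 : ∀ τ : ℝ, (if s < 1 + u τ then K (m * τ) else 0) = G (m * τ) := fun τ => by
    simp only [hG]; rw [mul_div_cancel_left₀ _ hm.ne']
  simp only [e1]
  rw [intervalIntegral.integral_comp_mul_left _ hm.ne']
  have e2 := hGp.intervalIntegral_add_zsmul_eq m (m * -π) hGi
  rw [show (m:ℝ) * -π + (m:ℤ) • (2 * π) = m * π by simp; ring] at e2
  rw [e2, hGp.intervalIntegral_add_eq (m * -π) (-π), show -π + 2 * π = π by ring]
  rw [show ((m:ℤ) • ∫ x in (-π)..π, G x) = (m:ℝ) * ∫ x in (-π)..π, G x by simp,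
    smul_eq_mul, inv_mul_cancel_left₀ hm.ne',
    ← intervalIntegral.integral_add_adjacent_intervals (hGi (-π) 0) (hGi 0 π)]
  have e3 : ∫ x in (-π)..0, G x = ∫ x in (0:ℝ)..π, G (-x) := by
    rw [intervalIntegral.integral_comp_neg, neg_zero]
  have hGn : ∀ a b, IntervalIntegrable (fun x => G (-x)) volume a b := fun a b => by
    have := (hGi (-a) (-b)).comp_sub_left 0
    simpa using this
  rw [e3, ← intervalIntegral.integral_add (hGn 0 π) (hGi 0 π),
    ← intervalIntegral.integral_add_adjacent_intervals
      ((hGn 0 (h.edge s)).add (hGi 0 (h.edge s))) ((hGn (h.edge s) π).add (hGi (h.edge s) π))]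
  have hGe : ∀ y, G (-y) + G y = if s < 1 + u (y / m) then K (-y) + K y else 0 := fun y => by
    simp only [hG, neg_div, h.even]
    split_ifs <;> simp
  have e4 : ∫ x in (0:ℝ)..(h.edge s), (G (-x) + G x)
      = ∫ x in (0:ℝ)..(h.edge s), (K (-x) + K x) := by
    rw [intervalIntegral.integral_of_le (h.edge_nonneg s),
      intervalIntegral.integral_of_le (h.edge_nonneg s),
      integral_Ioc_eq_integral_Ioo, integral_Ioc_eq_integral_Ioo]
    refine setIntegral_congr_fun measurableSet_Ioo fun x hx => ?_
    simp only [hGe]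
    rw [if_pos ((h.lt_edge s hx.1.le (hx.2.trans_le (h.edge_le s))).2 hx.2)]
  have e5 : ∫ x in (h.edge s)..π, (G (-x) + G x) = 0 := by
    rw [intervalIntegral.integral_of_le (h.edge_le s), integral_Ioc_eq_integral_Ioo]
    refine setIntegral_eq_zero_of_forall_eq_zero fun x hx => ?_
    simp only [hGe]
    rw [if_neg fun hh => absurd ((h.lt_edge s ((h.edge_nonneg s).trans hx.1.le) hx.2).1 hh)
      hx.1.not_gt]
  rw [e4, e5, add_zero]

end Prof

/-! ### The potential of the domain as an integral over slices -/

/-- The `m`-fold symmetrization of the kernel, from the factorization of `a^m - b^m` over the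
`m`-th roots of unity. -/
lemma sum_ell {m : ℕ} (hm : 1 ≤ m) {r s : ℝ} (hr : 0 < r) (hs : 0 < s) (hrs : r ≠ s) (x : ℝ) :
    ∑ j ∈ Finset.range m, ell r s (x - 2 * π * j / m) = ell (r ^ m) (s ^ m) (m * x) := by
  have hm0 : m ≠ 0 := by omega
  have hmC : (m : ℂ) ≠ 0 := by exact_mod_cast hm0
  have hmR : (m : ℝ) ≠ 0 := by exact_mod_cast hm0
  have hζ := Complex.isPrimitiveRoot_exp m hm0
  set ζ := Complex.exp (2 * π * Complex.I / m) with hz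
  have h1 := hζ.pow_sub_pow_eq_prod_sub_mul ((r:ℂ) * Complex.exp (x * Complex.I)) (s:ℂ) hm
  have h2 : ∏ z ∈ Polynomial.nthRootsFinset m (1:ℂ), ((r:ℂ) * Complex.exp (x * Complex.I) - z * s)
      = ∏ j ∈ Finset.range m, ((r:ℂ) * Complex.exp (x * Complex.I) - ζ ^ j * s) := by
    symm
    refine Finset.prod_bij (fun j _ => ζ ^ j) ?_ ?_ ?_ (fun _ _ => rfl)
    · intro j _
      rw [Polynomial.mem_nthRootsFinset hm, ← pow_mul, mul_comm, pow_mul, hζ.pow_eq_one, one_pow]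
    · intro i hi j hj hij
      exact hζ.pow_inj (Finset.mem_range.1 hi) (Finset.mem_range.1 hj) hij
    · intro z hz'
      have : NeZero m := ⟨hm0⟩
      obtain ⟨i, hi, hi'⟩ := hζ.eq_pow_of_pow_eq_one ((Polynomial.mem_nthRootsFinset hm _).1 hz')
      exact ⟨i, Finset.mem_range.2 hi, hi'⟩
  have hn : ∀ θ τ : ℝ, 0 < ‖(r:ℂ) * Complex.exp (θ * Complex.I) - s * Complex.exp (τ * Complex.I)‖ := by
    intro θ τ
    have := ell_arg_pos' hr hs hrs (θ - τ)
    rw [← ell_arg_eq] at this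
    by_contra hc
    rw [le_antisymm (not_lt.1 hc) (norm_nonneg _)] at this
    norm_num at this
  have hfac : ∀ j : ℕ, (r:ℂ) * Complex.exp (x * Complex.I) - ζ ^ j * s
      = (r:ℂ) * Complex.exp (x * Complex.I) - s * Complex.exp (((2 * π * j / m : ℝ) : ℂ) * Complex.I) := by
    intro j
    rw [hz, ← Complex.exp_nat_mul, mul_comm (Complex.exp _) (s:ℂ)]
    congr 3
    push_cast; field_simp
  rw [h2] at h1
  have h3 := congrArg (fun z : ℂ => Real.log ‖z‖) h1
  simp only [hfac] at h3
  rw [norm_prod, Real.log_prod (fun j _ => (hn _ _).ne')] at h3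
  simp only [log_norm_eq_ell] at h3
  rw [← h3, ← sub_zero ((m:ℝ) * x), ← log_norm_eq_ell]
  rw [mul_pow, ← Complex.exp_nat_mul]
  push_cast
  simp [mul_assoc]

namespace Prof
variable {m : ℕ} {u : ℝ → ℝ}

lemma ell_comp_integrable (r s θ a b : ℝ) :
    IntervalIntegrable (fun τ => ell r s (θ - τ)) volume a b := by
  have := (ell_intervalIntegrable r s (θ - a) (θ - b)).comp_sub_left θ
  simpa using this

lemma slice_integrable (h : Prof m u) (s : ℝ) {K : ℝ → ℝ} {a b : ℝ}
    (hK : IntervalIntegrable K volume a b) :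
    IntervalIntegrable ({τ : ℝ | s < 1 + u τ}.indicator K) volume a b := by
  have hS : MeasurableSet {τ : ℝ | s < 1 + u τ} := by
    have := h.cont
    exact (isOpen_lt continuous_const (by fun_prop)).measurableSet
  exact ⟨hK.1.indicator hS, hK.2.indicator hS⟩

open Classical in
/-- The `m`-fold symmetry turns the potential of a slice into the potential of a single arc. -/
lemma slice_ell (h : Prof m u) {r s : ℝ} (hr : 0 < r) (hs : 0 < s) (hrs : r ≠ s) (θ : ℝ) :
    ∫ τ in (-π)..π, {τ : ℝ | s < 1 + u τ}.indicator (fun τ => ell r s (θ - τ)) τ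
      = (1 / m) * arcPot (r ^ m) (m * θ) (s ^ m) (h.edge s) := by
  have hm := h.mpos
  have shift : ∀ j : ℕ,
      ∫ τ in (-π)..π, {τ : ℝ | s < 1 + u τ}.indicator (fun τ => ell r s (θ - τ)) τ
      = ∫ τ in (-π)..π, {τ : ℝ | s < 1 + u τ}.indicator
          (fun τ => ell r s (θ - τ - 2 * π * j / m)) τ := by
    intro j
    set g : ℝ → ℝ := {τ : ℝ | s < 1 + u τ}.indicator (fun τ => ell r s (θ - τ)) with hg
    have hgp : Function.Periodic g (2 * π) := fun τ => by
      simp only [hg, indicator, mem_ofPred_eq, h.per2 τ]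
      rw [← sub_sub, (ell_periodic r s).sub_eq]
    have e : ∀ τ, {τ : ℝ | s < 1 + u τ}.indicator (fun τ => ell r s (θ - τ - 2 * π * j / m)) τ
        = g (τ + 2 * π * j / m) := fun τ => by
      have : u (τ + 2 * π * j / m) = u τ := by
        have := h.per.nat_mul j τ
        rwa [show (j:ℝ) * (2 * π / m) = 2 * π * j / m by ring] at this
      simp only [hg, indicator, mem_ofPred_eq, this, sub_sub]
    simp only [e]
    rw [intervalIntegral.integral_comp_add_right,
      show π + 2 * π * j / m = (-π + 2 * π * j / m) + 2 * π by ring,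
      hgp.intervalIntegral_add_eq _ (-π)]
    congr 1; ring
  have hsum : (m:ℝ) * ∫ τ in (-π)..π, {τ : ℝ | s < 1 + u τ}.indicator (fun τ => ell r s (θ - τ)) τ
      = ∫ τ in (-π)..π, (if s < 1 + u τ then ell (r ^ m) (s ^ m) (m * θ - m * τ) else 0) := by
    have : (m:ℝ) * ∫ τ in (-π)..π, {τ : ℝ | s < 1 + u τ}.indicator (fun τ => ell r s (θ - τ)) τ
        = ∑ j ∈ Finset.range m, ∫ τ in (-π)..π, {τ : ℝ | s < 1 + u τ}.indicator
          (fun τ => ell r s (θ - τ - 2 * π * j / m)) τ := by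
      rw [← Finset.sum_congr rfl (fun j _ => shift j)]
      simp
    rw [this, ← intervalIntegral.integral_finsetSum]
    · refine intervalIntegral.integral_congr fun τ _ => ?_
      simp only [indicator, mem_ofPred_eq]
      split_ifs with hc
      · rw [sum_ell h.hm hr hs hrs, mul_sub]
      · simp
    · intro j _
      refine h.slice_integrable s ?_
      have := ell_comp_integrable r s (θ - 2 * π * j / m) (-π) π
      refine this.congr (fun τ _ => ?_)
      congr 1; ring
  have := h.slice_integral s (K := fun y => ell (r ^ m) (s ^ m) (m * θ - y))
    (fun y => by simp only; rw [← sub_sub, (ell_periodic _ _).sub_eq]) (ell_comp_integrable _ _ _)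
  rw [this] at hsum
  rw [one_div, eq_inv_mul_iff_mul_eq₀ hm.ne', hsum, arcPot]
  simp only [sub_neg_eq_add]
  refine intervalIntegral.integral_congr fun y _ => ?_
  ring

/-- The slice at radius `s` has angular measure `2 * edge s`. -/
lemma slice_one (h : Prof m u) (s : ℝ) :
    ∫ τ in (-π)..π, {τ : ℝ | s < 1 + u τ}.indicator (fun _ => (1:ℝ)) τ = 2 * h.edge s := by
  classical
  have := h.slice_integral s (K := fun _ => 1) (fun _ => rfl) (fun _ _ => intervalIntegrable_const)
  simp only [indicator, mem_ofPred_eq]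
  rw [this]; simp; ring

/-- Integration over the domain in polar coordinates, both orders. -/
lemma polar_slices (h : Prof m u) {f : ℂ → ℝ} (hf : Measurable f) (hi : IntegrableOn f (starDom u)) :
    IntervalIntegrable (fun s => s * ∫ τ in (-π)..π, {τ : ℝ | s < 1 + u τ}.indicator
        (fun τ => f (s * Complex.exp (τ * Complex.I))) τ) volume 0 2 ∧
    (∫ z in starDom u, f z) = (∫ s in (0:ℝ)..2, s * ∫ τ in (-π)..π, {τ : ℝ | s < 1 + u τ}.indicator
        (fun τ => f (s * Complex.exp (τ * Complex.I))) τ) ∧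
    (∫ z in starDom u, f z) = ∫ τ in (-π)..π, ∫ s in (0:ℝ)..(1 + u τ),
        s * f (s * Complex.exp (τ * Complex.I)) := by
  have hpi : -π ≤ π := by linarith [pi_pos]
  set F : ℂ → ℝ := (starDom u).indicator f with hF
  have hFm : Measurable F := hf.indicator h.measurable_star
  have hFi : Integrable F := hi.integrable_indicator h.measurable_star
  have hp := polar_integrable hFm hFi
  have hFv : ∀ {s : ℝ}, 0 < s → ∀ τ : ℝ, F (s * Complex.exp (τ * Complex.I))
      = {τ : ℝ | s < 1 + u τ}.indicator (fun τ => f (s * Complex.exp (τ * Complex.I))) τ := by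
    intro s hs τ
    simp only [hF, indicator, h.mem_star hs.le, mem_ofPred_eq]
  rw [IntegrableOn, ← Measure.prod_restrict] at hp
  have hE : ∀ s : ℝ, 0 < s → ∫ τ in Ioo (-π) π, s * F (s * Complex.exp (τ * Complex.I))
      = s * ∫ τ in (-π)..π, {τ : ℝ | s < 1 + u τ}.indicator
        (fun τ => f (s * Complex.exp (τ * Complex.I))) τ := by
    intro s hs
    simp only [hFv hs]
    rw [integral_const_mul, intervalIntegral.integral_of_le hpi, integral_Ioc_eq_integral_Ioo]
  have hz : ∀ s : ℝ, 2 < s → ∫ τ in Ioo (-π) π, s * F (s * Complex.exp (τ * Complex.I)) = 0 := by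
    intro s hs
    refine setIntegral_eq_zero_of_forall_eq_zero fun τ _ => ?_
    rw [hFv (by linarith), indicator_of_notMem, mul_zero]
    simp only [mem_ofPred_eq, not_lt]; linarith [h.hi τ]
  have h1 := hp.integral_prod_left
  have h2 := integral_prod _ hp
  have h3 := integral_prod_symm _ hp
  rw [Measure.prod_restrict, ← polar_integral] at h2 h3
  rw [hF, integral_indicator h.measurable_star] at h2 h3
  refine ⟨?_, ?_, ?_⟩
  · rw [intervalIntegrable_iff_integrableOn_Ioc_of_le (by norm_num)]
    have h1' : IntegrableOn _ (Ioc (0:ℝ) 2) := IntegrableOn.mono_set h1 Ioc_subset_Ioi_self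
    exact h1'.congr_fun (fun s hs => hE s hs.1) measurableSet_Ioc
  · rw [h2, intervalIntegral.integral_of_le (by norm_num)]
    rw [← setIntegral_congr_fun measurableSet_Ioc (fun s hs => hE s hs.1)]
    refine setIntegral_eq_of_subset_of_forall_sdiff_eq_zero measurableSet_Ioi Ioc_subset_Ioi_self ?_
    intro s hs
    refine hz s (lt_of_not_ge fun hc => hs.2 ⟨hs.1, hc⟩)
  · rw [h3, intervalIntegral.integral_of_le hpi, integral_Ioc_eq_integral_Ioo]
    refine setIntegral_congr_fun measurableSet_Ioo fun τ _ => ?_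
    simp only
    rw [intervalIntegral.integral_of_le (by linarith [h.lo τ]), integral_Ioc_eq_integral_Ioo]
    rw [setIntegral_congr_fun (g := fun s => (Iio (1 + u τ)).indicator
      (fun s : ℝ => s * f (s * Complex.exp (τ * Complex.I))) s) measurableSet_Ioi, setIntegral_indicator measurableSet_Iio, Ioi_inter_Iio]
    intro s hs
    have := hFv hs τ
    simp only [hF] at this
    simp only [this]
    simp only [indicator, mem_ofPred_eq, mem_Iio]
    split_ifs <;> simp

lemma polar_mem_ball {r : ℝ} (hr : 0 < r) (hr2 : r < 2) (θ : ℝ) :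
    (r * Complex.exp (θ * Complex.I) : ℂ) ∈ Metric.ball (0:ℂ) 2 := by
  rw [mem_ball_zero_iff, norm_mul, Complex.norm_exp_ofReal_mul_I, mul_one, Complex.norm_real,
    Real.norm_of_nonneg hr.le]
  exact hr2

/-- The logarithmic potential of the domain, as an integral of potentials of arcs. -/
lemma logPot_polar (h : Prof m u) {r : ℝ} (hr : 0 < r) (hr2 : r < 2) (θ : ℝ) :
    IntervalIntegrable (fun s => s * arcPot (r ^ m) (m * θ) (s ^ m) (h.edge s)) volume 0 2 ∧
    logPot (starDom u) (r * Complex.exp (θ * Complex.I))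
      = (1 / m) * ∫ s in (0:ℝ)..2, s * arcPot (r ^ m) (m * θ) (s ^ m) (h.edge s) := by
  have hm := h.mpos
  obtain ⟨h1, h2, -⟩ := h.polar_slices (f := fun y => Real.log ‖r * Complex.exp (θ * Complex.I) - y‖)
    (Real.measurable_log.comp (by fun_prop))
    (integrableOn_log h.star_sub' h.measurable_star (polar_mem_ball hr hr2 θ))
  simp only [log_norm_eq_ell] at h1 h2
  have hae : ∀ᵐ s : ℝ, s ∈ uIoc (0:ℝ) 2 →
      s * (∫ τ in (-π)..π, {τ : ℝ | s < 1 + u τ}.indicator (fun τ => ell r s (θ - τ)) τ)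
      = (1 / m) * (s * arcPot (r ^ m) (m * θ) (s ^ m) (h.edge s)) := by
    filter_upwards [Measure.ae_ne volume r] with s hs hs2
    rw [uIoc_of_le (by norm_num)] at hs2
    rw [h.slice_ell hr hs2.1 (Ne.symm hs)]; ring
  constructor
  · have := (h1.congr_ae ((ae_restrict_iff' measurableSet_uIoc).2 hae)).const_mul (m:ℝ)
    refine this.congr fun s _ => ?_
    field_simp
  · rw [logPot, h2, intervalIntegral.integral_congr_ae hae, intervalIntegral.integral_const_mul]

/-- Integrals of radial functions over the domain. -/
lemma radial_integral (h : Prof m u) {g : ℝ → ℝ} (hg : Measurable g)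
    (hi : IntegrableOn (fun z : ℂ => g ‖z‖) (starDom u)) :
    IntervalIntegrable (fun s => s * g s * (2 * h.edge s)) volume 0 2 ∧
    (∫ z in starDom u, g ‖z‖) = (∫ s in (0:ℝ)..2, s * g s * (2 * h.edge s)) ∧
    (∫ z in starDom u, g ‖z‖) = ∫ τ in (-π)..π, ∫ s in (0:ℝ)..(1 + u τ), s * g s := by
  obtain ⟨h1, h2, h3⟩ := h.polar_slices (f := fun z => g ‖z‖) (hg.comp measurable_norm) hi
  have hn : ∀ {s : ℝ}, 0 < s → ∀ τ : ℝ, ‖(s * Complex.exp (τ * Complex.I) : ℂ)‖ = s := by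
    intro s hs τ
    rw [norm_mul, Complex.norm_exp_ofReal_mul_I, mul_one, Complex.norm_real,
      Real.norm_of_nonneg hs.le]
  have e : EqOn (fun s => s * ∫ τ in (-π)..π, {τ : ℝ | s < 1 + u τ}.indicator
        (fun τ => g ‖(s * Complex.exp (τ * Complex.I) : ℂ)‖) τ)
      (fun s => s * g s * (2 * h.edge s)) (Ioc 0 2) := by
    intro s hs
    simp only [hn hs.1]
    rw [← h.slice_one s, mul_assoc, ← intervalIntegral.integral_const_mul (g s)]
    congr 1
    refine intervalIntegral.integral_congr fun τ _ => ?_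
    simp only [indicator]; split_ifs <;> simp
  refine ⟨h1.congr (by rwa [uIoc_of_le (by norm_num)]), ?_, ?_⟩
  · rw [h2]
    rw [intervalIntegral.integral_of_le (by norm_num), intervalIntegral.integral_of_le (by norm_num)]
    exact setIntegral_congr_fun measurableSet_Ioc e
  · rw [h3]
    refine intervalIntegral.integral_congr fun τ _ => ?_
    have := h.lo τ
    rw [intervalIntegral.integral_of_le (by linarith), intervalIntegral.integral_of_le (by linarith)]
    refine setIntegral_congr_fun measurableSet_Ioc fun s hs => ?_
    simp only [hn hs.1]

end Prof

/-! ### Radial integrals and disks -/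

lemma integral_mul_log {r b : ℝ} (hr : 0 < r) (hrb : r ≤ b) :
    ∫ s in r..b, s * Real.log s
      = (b ^ 2 / 2 * Real.log b - b ^ 2 / 4) - (r ^ 2 / 2 * Real.log r - r ^ 2 / 4) := by
  have hpos : ∀ x ∈ uIcc r b, 0 < x := fun x hx => by
    rw [uIcc_of_le hrb] at hx; exact hr.trans_le hx.1
  refine intervalIntegral.integral_eq_sub_of_hasDerivAt
    (f := fun s => s ^ 2 / 2 * Real.log s - s ^ 2 / 4) (fun x hx => ?_) ?_
  · have hx0 := hpos x hx
    have := (((hasDerivAt_pow 2 x).div_const 2).mul (Real.hasDerivAt_log hx0.ne')).sub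
      ((hasDerivAt_pow 2 x).div_const 4)
    refine this.congr_deriv ?_
    field_simp; push_cast; ring
  · refine ContinuousOn.intervalIntegrable (continuousOn_id.mul
      (Real.continuousOn_log.mono fun x hx => (hpos x hx).ne'))

lemma integral_mul_log_max {r b : ℝ} (hr : 0 < r) (hb : 0 < b) :
    ∫ s in (0:ℝ)..b, s * Real.log (max r s)
      = b ^ 2 / 2 * Real.log (max b r) - max 0 (b ^ 2 - r ^ 2) / 4 := by
  have hc : Continuous fun s => s * Real.log (max r s) :=
    continuous_id.mul ((continuous_const.max continuous_id).log
      fun s => (lt_max_of_lt_left hr).ne')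
  have small : ∀ x, 0 ≤ x → x ≤ r → ∫ s in (0:ℝ)..x, s * Real.log (max r s)
      = x ^ 2 / 2 * Real.log r := by
    intro x h0 hx
    rw [intervalIntegral.integral_congr (g := fun s => s * Real.log r) (fun s hs => ?_)]
    · rw [intervalIntegral.integral_mul_const, integral_id]; ring
    · rw [uIcc_of_le h0] at hs
      simp only [max_eq_left (hs.2.trans hx)]
  rcases le_total b r with h | h
  · rw [small b hb.le h, max_eq_right h, max_eq_left (by nlinarith)]; ring
  · rw [← intervalIntegral.integral_add_adjacent_intervals (hc.intervalIntegrable 0 r)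
      (hc.intervalIntegrable r b), small r hr.le le_rfl,
      intervalIntegral.integral_congr (g := fun s => s * Real.log s) (fun s hs => ?_),
      integral_mul_log hr h, max_eq_left h, max_eq_right (by nlinarith)]
    · ring
    · rw [uIcc_of_le h] at hs
      simp only [max_eq_right hs.1]

/-- Centred disks are the star-shaped domains with constant profile. -/
lemma constProf {d : ℝ} (hd : |d| ≤ 1 / 2) : Prof 1 (fun _ => -d) where
  hm := le_rfl
  cont := continuous_const
  even _ := rfl
  per _ := rfl
  anti _ _ _ _ _ := le_rfl
  bd _ := by rwa [abs_neg]

lemma starDom_const (d : ℝ) : starDom (fun _ => -d) = Metric.ball 0 (1 - d) := by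
  ext z; simp [starDom, sub_eq_add_neg]

/-- The logarithmic potential of a disk. -/
lemma logPot_ball {d : ℝ} (hd : |d| ≤ 1 / 2) {y : ℂ} (hy : y ≠ 0) (hy2 : ‖y‖ < 2) :
    logPot (Metric.ball 0 (1 - d)) y = π * (1 - d) ^ 2 * Real.log (max (1 - d) ‖y‖)
      - π / 2 * max 0 ((1 - d) ^ 2 - ‖y‖ ^ 2) := by
  have h := constProf hd
  have hd' := abs_le.1 hd
  have hr0 : 0 < 1 - d := by linarith
  have hn : 0 < ‖y‖ := norm_pos_iff.2 hy
  obtain ⟨hi, e⟩ := h.logPot_polar hn hy2 (Complex.arg y)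
  rw [Complex.norm_mul_exp_arg_mul_I, starDom_const] at e
  simp only [pow_one, Nat.cast_one, one_mul, div_one] at e hi
  have hsub : ∀ a b, 0 ≤ a → a ≤ b → b ≤ 2 → IntervalIntegrable
      (fun s => s * arcPot ‖y‖ (Complex.arg y) s (h.edge s)) volume a b := fun a b h0 h1 h2 =>
    hi.mono_set (by rw [uIcc_of_le h1, uIcc_of_le (by norm_num)]; exact Icc_subset_Icc h0 h2)
  rw [e, ← intervalIntegral.integral_add_adjacent_intervals (b := 1 - d)
    (hsub _ _ le_rfl hr0.le (by linarith)) (hsub _ _ hr0.le (by linarith) le_rfl)]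
  have e1 : ∫ s in (0:ℝ)..(1 - d), s * arcPot ‖y‖ (Complex.arg y) s (h.edge s)
      = ∫ s in (0:ℝ)..(1 - d), 2 * π * (s * Real.log (max ‖y‖ s)) := by
    refine intervalIntegral.integral_congr_uIoo fun s hs => ?_
    rw [uIoo_of_le hr0.le] at hs
    rw [h.edge_eq_pi (by linarith [hs.2]), arcPot_pi hn hs.1]; ring
  have e2 : ∫ s in (1 - d)..2, s * arcPot ‖y‖ (Complex.arg y) s (h.edge s) = 0 := by
    rw [intervalIntegral.integral_congr_uIoo (g := fun _ => (0:ℝ)) fun s hs => ?_]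
    · simp
    rw [uIoo_of_le (by linarith)] at hs
    have : h.edge s = 0 := by
      refine le_antisymm (not_lt.1 fun hc => ?_) (h.edge_nonneg s)
      have := (h.lt_edge s le_rfl pi_pos).2 hc
      linarith [hs.1]
    simp [this, arcPot]
  rw [e1, e2, intervalIntegral.integral_const_mul, integral_mul_log_max hn hr0]
  ring

section
variable {m : ℕ} {u : ℝ → ℝ}

lemma Prof.finite (h : Prof m u) : IsFiniteMeasure (volume.restrict (starDom u)) :=
  ⟨by simpa using volume_lt_top_of_subset_ball h.star_sub'⟩

lemma Prof.integrable_radial (h : Prof m u) {g : ℝ → ℝ} (hg : Continuous g) :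
    IntegrableOn (fun z : ℂ => g ‖z‖) (starDom u) :=
  (Continuous.locallyIntegrable (hg.comp continuous_norm)).integrableOn_isCompact
    (isCompact_closedBall 0 (3/2)) |>.mono_set h.star_sub

lemma Prof.integral_one (h : Prof m u) :
    volume.real (starDom u) = ∫ τ in (-π)..π, (1 + u τ) ^ 2 / 2 := by
  have := (h.radial_integral (g := fun _ => 1) measurable_const
    (h.integrable_radial continuous_const)).2.2
  simp only [integral_const, smul_eq_mul, mul_one, measureReal_restrict_apply_univ, integral_id] at this
  rw [this]
  refine intervalIntegral.integral_congr fun τ _ => ?_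
  ring

lemma Prof.integral_sq (h : Prof m u) :
    ∫ z in starDom u, ‖z‖ ^ 2 = ∫ τ in (-π)..π, (1 + u τ) ^ 4 / 4 := by
  have := (h.radial_integral (g := fun s => s ^ 2) (by fun_prop)
    (h.integrable_radial (g := fun s => s ^ 2) (by fun_prop))).2.2
  rw [this]
  refine intervalIntegral.integral_congr fun τ _ => ?_
  simp only [← pow_succ']
  rw [integral_pow]; norm_num

lemma integral_sq_max {r b : ℝ} (hr : 0 ≤ r) (hrb : r ≤ b) :
    ∫ s in (0:ℝ)..b, s * max 0 (r ^ 2 - s ^ 2) = r ^ 4 / 4 := by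
  have hc : Continuous fun s => s * max 0 (r ^ 2 - s ^ 2) := by fun_prop
  rw [← intervalIntegral.integral_add_adjacent_intervals (hc.intervalIntegrable 0 r)
    (hc.intervalIntegrable r b),
    intervalIntegral.integral_congr (a := 0) (g := fun s => r ^ 2 * s - s ^ 3) (fun s hs => ?_),
    intervalIntegral.integral_congr (a := r) (g := fun s => 0) (fun s hs => ?_)]
  · rw [intervalIntegral.integral_sub (by apply Continuous.intervalIntegrable; fun_prop)
      (by apply Continuous.intervalIntegrable; fun_prop), intervalIntegral.integral_const_mul,
      integral_id, integral_pow]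
    simp; ring
  · rw [uIcc_of_le hrb] at hs
    simp only
    rw [max_eq_left (by nlinarith [hs.1]), mul_zero]
  · rw [uIcc_of_le hr] at hs
    simp only
    rw [max_eq_right (by nlinarith [hs.1, hs.2])]; ring

/-- The mutual energy of the domain and its largest inscribed centred disk. -/
lemma Prof.mutual (h : Prof m u) {d : ℝ} (hd : |d| ≤ 1 / 2) (hdu : ∀ θ, -d ≤ u θ) :
    ∫ z in Metric.ball 0 (1 - d), logPot (starDom u) z
      = π * (1 - d) ^ 2 * (∫ z in starDom u, Real.log (max (1 - d) ‖z‖)) - π ^ 2 * (1 - d) ^ 4 / 4 := by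
  have hd' := abs_le.1 hd
  have hr0 : 0 < 1 - d := by linarith
  have hc1 : Continuous fun s : ℝ => Real.log (max (1 - d) s) :=
    ((continuous_const.max continuous_id).log fun s => (lt_max_of_lt_left hr0).ne')
  have hc2 : Continuous fun s : ℝ => max 0 ((1 - d) ^ 2 - s ^ 2) := by fun_prop
  rw [integral_logPot_comm (Metric.ball_subset_ball (by linarith)) measurableSet_ball h.star_sub'
    h.measurable_star]
  rw [setIntegral_congr_ae (g := fun z => π * (1 - d) ^ 2 * Real.log (max (1 - d) ‖z‖)
      - π / 2 * max 0 ((1 - d) ^ 2 - ‖z‖ ^ 2)) h.measurable_star]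
  · rw [integral_sub ((h.integrable_radial hc1).const_mul _) ((h.integrable_radial hc2).const_mul _),
      integral_const_mul, integral_const_mul,
      (h.radial_integral hc2.measurable (h.integrable_radial hc2)).2.2,
      intervalIntegral.integral_congr (g := fun _ => (1 - d) ^ 4 / 4)]
    · simp; ring
    · intro τ _
      exact integral_sq_max hr0.le (by linarith [hdu τ])
  · filter_upwards [Measure.ae_ne volume (0:ℂ)] with y hy hyD
    exact logPot_ball hd hy (mem_ball_zero_iff.1 (h.star_sub' hyD))

end

/-! ### Energy comparison -/

/-- The patch equation on the boundary of the star-shaped domain. For the potential normalized as in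
`logPot`, the coefficient `w` is `π` times the angular velocity `Ω`. -/
def BdryEq (u : ℝ → ℝ) (c w : ℝ) : Prop :=
  ∀ θ : ℝ, logPot (starDom u) (((1 + u θ : ℝ) : ℂ) * Complex.exp (θ * Complex.I))
    = c + w * (1 + u θ) ^ 2

namespace Prof
variable {m : ℕ} {u : ℝ → ℝ} {c w : ℝ}

/-- Moving a point of the domain along its circle to the boundary increases the potential. -/
lemma logPot_le (h : Prof m u) (hb : BdryEq u c w) {x : ℂ} (hx : x ∈ starDom u)
    (hr : 1 + u (π / m) ≤ ‖x‖) : logPot (starDom u) x ≤ c + w * ‖x‖ ^ 2 := by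
  have hm := h.mpos
  have hx2 : ‖x‖ < 2 := mem_ball_zero_iff.1 (h.star_sub' hx)
  have hr0 : 0 < ‖x‖ := by linarith [h.lo (π / m)]
  obtain ⟨T, hT0, hT1, hTu, hTa⟩ := h.exists_reduce (Complex.arg x)
  have hxu : ‖x‖ < 1 + u (T / m) := by rw [hTu]; exact hx
  have he := h.u_edge hr (hxu.le.trans (by linarith [h.le_zero (T / m)]))
  have hTe : T ≤ h.edge ‖x‖ := by
    rcases hT1.eq_or_lt with rfl | hlt
    · linarith
    · exact ((h.lt_edge _ hT0 hlt).1 hxu).le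
  obtain ⟨i1, e1⟩ := h.logPot_polar hr0 hx2 (Complex.arg x)
  obtain ⟨i2, e2⟩ := h.logPot_polar hr0 hx2 (h.edge ‖x‖ / m)
  have hb' := hb (h.edge ‖x‖ / m)
  rw [he] at hb'
  rw [Complex.norm_mul_exp_arg_mul_I] at e1
  rw [← hb', e2, e1]
  refine mul_le_mul_of_nonneg_left ?_ (by positivity)
  refine intervalIntegral.integral_mono_on_of_le_Ioo (by norm_num) i1 i2 fun s hs => ?_
  refine mul_le_mul_of_nonneg_left ?_ hs.1.le
  rw [hTa, mul_div_cancel₀ _ hm.ne']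
  have := hs.1
  exact arcPot_mono (by positivity) (by positivity) hT0 hTe (h.edge_le _) (h.edge_nonneg _)
    (h.edge_le _)

/-- The potential at the tip of the spike dominates the one of the radial rearrangement. -/
lemma tip_ge (h : Prof m u) (hb : BdryEq u c w) :
    ∫ z in starDom u, Real.log (max (1 + u (π / m)) ‖z‖) ≤ c + w * (1 + u (π / m)) ^ 2 := by
  have hm := h.mpos
  set r₀ := 1 + u (π / m) with hr
  have hr0 : 0 < r₀ := by linarith [h.lo (π / m)]
  have hr2 : r₀ < 2 := by linarith [h.hi (π / m)]
  have hc1 : Continuous fun s : ℝ => Real.log (max r₀ s) :=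
    ((continuous_const.max continuous_id).log fun s => (lt_max_of_lt_left hr0).ne')
  obtain ⟨i1, e1, -⟩ := h.radial_integral hc1.measurable (h.integrable_radial hc1)
  obtain ⟨i2, e2⟩ := h.logPot_polar hr0 hr2 (π / m)
  rw [← hb, e2, e1, ← intervalIntegral.integral_const_mul]
  refine intervalIntegral.integral_mono_on_of_le_Ioo (by norm_num) i1 (i2.const_mul _) fun s hs => ?_
  have hs0 := hs.1
  have := arcPot_tip (pow_pos hr0 m) (pow_pos hs0 m) (h.edge_nonneg s) (h.edge_le s)
  rw [← (pow_left_strictMonoOn₀ (M₀ := ℝ) (by have := h.hm; omega : m ≠ 0)).monotoneOn.map_max hr0.le hs0.le,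
    Real.log_pow] at this
  rw [mul_div_cancel₀ _ hm.ne', one_div, le_inv_mul_iff₀ hm]
  calc (m:ℝ) * (s * Real.log (max r₀ s) * (2 * h.edge s))
      = s * (2 * h.edge s * (m * Real.log (max r₀ s))) := by ring
    _ ≤ _ := mul_le_mul_of_nonneg_left this hs0.le

open scoped Pointwise in
/-- The dilation inequality applied to the domain; a point of the shell between the domain and its
dilate is compared with the boundary point on the same ray. -/
lemma energy_lower (h : Prof m u) (hvol : volume.real (starDom u) = π) (hb : BdryEq u c w) :
    4 * π * c + 8 * w * (∫ x in starDom u, ‖x‖ ^ 2)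
      ≤ 4 * (∫ x in starDom u, logPot (starDom u) x) + π ^ 2 := by
  refine energy_ineq h.star_sub h.measurable_star hvol c w ?_ ?_
  · intro l hl z hz
    have hl0 : 0 < l := by linarith
    rw [mem_smul_set_iff_inv_smul_mem₀ hl0.ne']
    change ‖l⁻¹ • z‖ < 1 + u (Complex.arg (l⁻¹ • z))
    rw [norm_smul, Real.norm_of_nonneg (by positivity), Complex.real_smul,
      Complex.arg_real_mul _ (by positivity)]
    have hz' : ‖z‖ < 1 + u (Complex.arg z) := hz
    have : l⁻¹ * ‖z‖ ≤ ‖z‖ := mul_le_of_le_one_left (norm_nonneg _) (inv_le_one_of_one_le₀ hl.le)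
    linarith
  · intro l hl x hx hxD
    have hl0 : 0 < l := by linarith
    rw [mem_smul_set_iff_inv_smul_mem₀ hl0.ne'] at hx
    change ‖l⁻¹ • x‖ < 1 + u (Complex.arg (l⁻¹ • x)) at hx
    rw [norm_smul, Real.norm_of_nonneg (by positivity), Complex.real_smul,
      Complex.arg_real_mul _ (by positivity), inv_mul_lt_iff₀ hl0] at hx
    have hxD' : 1 + u (Complex.arg x) ≤ ‖x‖ := not_lt.1 hxD
    set R := 1 + u (Complex.arg x) with hR
    have hR0 : 0 < R := by linarith [h.lo (Complex.arg x)]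
    have hR2 : R ≤ 2 := by linarith [h.hi (Complex.arg x)]
    have hn : ‖((R : ℝ) : ℂ) * Complex.exp (Complex.arg x * Complex.I)‖ = R := by
      rw [norm_mul, Complex.norm_exp_ofReal_mul_I, mul_one, Complex.norm_real,
        Real.norm_of_nonneg hR0.le]
    refine ⟨(R : ℂ) * Complex.exp (Complex.arg x * Complex.I), ?_, by rw [hn]; exact hxD', ?_⟩
    · have : x - (R : ℂ) * Complex.exp (Complex.arg x * Complex.I)
          = ((‖x‖ - R : ℝ) : ℂ) * Complex.exp (Complex.arg x * Complex.I) := by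
        nth_rewrite 1 [← Complex.norm_mul_exp_arg_mul_I x]
        push_cast; ring
      rw [this, norm_mul, Complex.norm_exp_ofReal_mul_I, mul_one, Complex.norm_real,
        Real.norm_of_nonneg (by linarith)]
      nlinarith
    · rw [hn]; exact hb _

/-- Upper bound for the energy: `logPot_le` outside the inscribed disk of radius `1 + u (π / m)`, and
the explicit mutual energy together with `tip_ge` inside it. -/
lemma energy_upper (h : Prof m u) (hvol : volume.real (starDom u) = π) (hb : BdryEq u c w) :
    ∫ x in starDom u, logPot (starDom u) x ≤ c * π + w * (∫ x in starDom u, ‖x‖ ^ 2)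
      - π * (1 + u (π / m)) ^ 4 / 2 * (π / 2 - w) := by
  have := h.finite
  set d := -u (π / m) with hd
  have hdb : |d| ≤ 1 / 2 := by rw [hd, abs_neg]; exact h.bd _
  have hr : 1 + u (π / m) = 1 - d := by rw [hd]; ring
  have hr0 : 0 < 1 - d := by rw [← hr]; linarith [h.lo (π / m)]
  have hmut := h.mutual hdb (fun θ => by rw [hd, neg_neg]; exact h.min_le θ)
  have htip := h.tip_ge hb
  rw [hr] at htip ⊢
  set M := ∫ z in starDom u, Real.log (max (1 - d) ‖z‖)
  set B := Metric.ball (0:ℂ) (1 - d) with hB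
  have hBD : B ⊆ starDom u := fun z hz => by
    rw [hB, mem_ball_zero_iff] at hz
    have := h.min_le (Complex.arg z)
    change ‖z‖ < 1 + u (Complex.arg z)
    linarith
  have hBm : MeasurableSet B := measurableSet_ball
  have iL : IntegrableOn (logPot (starDom u)) (starDom u) :=
    integrableOn_logPot h.star_sub' h.measurable_star h.star_sub' h.measurable_star
  have i2 : IntegrableOn (fun z : ℂ => c + w * ‖z‖ ^ 2) (starDom u) :=
    h.integrable_radial (g := fun s => c + w * s ^ 2) (by fun_prop)
  have i3 : IntegrableOn (fun z : ℂ => ‖z‖ ^ 2) (starDom u) :=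
    h.integrable_radial (g := fun s => s ^ 2) (by fun_prop)
  have s1 := setIntegral_sdiff hBm iL hBD
  have s2 := setIntegral_sdiff hBm i2 hBD
  have hle : ∫ x in starDom u \ B, logPot (starDom u) x ≤ ∫ z in starDom u \ B, (c + w * ‖z‖ ^ 2) := by
    refine setIntegral_mono_on (iL.mono_set sdiff_subset) (i2.mono_set sdiff_subset)
      (h.measurable_star.diff hBm) fun x hx => ?_
    refine h.logPot_le hb hx.1 ?_
    rw [hr]
    have := hx.2
    rw [hB, mem_ball_zero_iff] at this
    exact not_lt.1 this
  have vD : ∫ z in starDom u, (c + w * ‖z‖ ^ 2) = c * π + w * ∫ z in starDom u, ‖z‖ ^ 2 := by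
    rw [integral_add (integrable_const _) (i3.const_mul _), integral_const_mul]
    simp [hvol, mul_comm]
  have hc := constProf hdb
  have hcf := hc.finite
  have iB : IntegrableOn (fun z : ℂ => ‖z‖ ^ 2) (starDom fun _ => -d) :=
    hc.integrable_radial (g := fun s => s ^ 2) (by fun_prop)
  have o1 := hc.integral_one
  have o2 := hc.integral_sq
  rw [starDom_const, ← hB] at o1 o2 iB hcf
  rw [intervalIntegral.integral_const, smul_eq_mul] at o1 o2
  have vB : ∫ z in B, (c + w * ‖z‖ ^ 2)
      = c * (π * (1 - d) ^ 2) + w * (π * (1 - d) ^ 4 / 2) := by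
    rw [integral_add (integrable_const _) (iB.const_mul _), integral_const_mul, o2]
    simp only [integral_const, measureReal_restrict_apply_univ, smul_eq_mul, o1]
    ring
  rw [s1, s2, vD, vB, hmut] at hle
  have : π * (1 - d) ^ 2 * M ≤ π * (1 - d) ^ 2 * (c + w * (1 - d) ^ 2) :=
    mul_le_mul_of_nonneg_left htip (by positivity)
  linarith

/-- Outcome of the energy comparison: as `π / 2 - w = π (1/2 - Ω)`, the angular velocity stays below
`1/2` by an amount controlled by the deviation of the domain from the disk. -/
lemma step_one (h : Prof m u) (hvol : volume.real (starDom u) = π) (hb : BdryEq u c w)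
    (hδ : u (π / m) < 0) :
    π * (∫ θ in (-π)..π, u θ ^ 2) / 50 ≤ (π / 2 - w) * (-u (π / m)) := by
  have hlow := h.energy_lower hvol hb
  have hup := h.energy_upper hvol hb
  have hu := h.cont
  have ci : ∀ {f : ℝ → ℝ}, Continuous f → IntervalIntegrable f volume (-π) π :=
    fun hf => hf.intervalIntegrable _ _
  have hpi : -π ≤ π := by linarith [pi_pos]
  set q := ∫ θ in (-π)..π, u θ ^ 2 with hq
  set Q := ∫ θ in (-π)..π, ((1 + u θ) ^ 2 - 1) ^ 2 with hQ
  obtain ⟨d, hd⟩ : ∃ d, d = -u (π / m) := ⟨_, rfl⟩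
  have area := h.integral_one
  rw [hvol] at area
  have hone : ∫ _ in (-π)..π, (1:ℝ) = 2 * π := by simp; ring
  have hJ : ∫ x in starDom u, ‖x‖ ^ 2 = π / 2 + Q / 4 := by
    rw [h.integral_sq]
    have e : ∀ θ, (1 + u θ) ^ 4 / 4 = ((1 + u θ) ^ 2 - 1) ^ 2 * (1/4) + (1 + u θ) ^ 2 / 2 - 1 / 4 * 1 := fun θ => by ring
    simp only [e]
    rw [intervalIntegral.integral_sub (ci (by fun_prop)) (ci (by fun_prop)),
      intervalIntegral.integral_add (ci (by fun_prop)) (ci (by fun_prop)), ← area,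
      intervalIntegral.integral_mul_const, intervalIntegral.integral_const_mul, hone]
    ring
  have hQq : 9 / 4 * q ≤ Q := by
    rw [hq, ← intervalIntegral.integral_const_mul]
    refine intervalIntegral.integral_mono_on hpi (ci (by fun_prop)) (ci (by fun_prop)) fun θ _ => ?_
    have := h.lo θ
    have : ((1 + u θ) ^ 2 - 1) ^ 2 = u θ ^ 2 * (2 + u θ) ^ 2 := by ring
    rw [this, mul_comm]
    exact mul_le_mul_of_nonneg_left (by nlinarith) (sq_nonneg _)
  have hq0 : 0 ≤ q := intervalIntegral.integral_nonneg hpi fun θ _ => sq_nonneg _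
  -- The normalization of the area.
  have hlin : ∫ θ in (-π)..π, u θ = -q / 2 := by
    have e : ∀ θ, (1 + u θ) ^ 2 / 2 = u θ ^ 2 * (1 / 2) + u θ + 1 / 2 * 1 := fun θ => by ring
    simp only [e] at area
    rw [intervalIntegral.integral_add (ci (by fun_prop)) (ci (by fun_prop)),
      intervalIntegral.integral_add (ci (by fun_prop)) (ci (by fun_prop)),
      intervalIntegral.integral_mul_const, intervalIntegral.integral_const_mul, hone] at area
    linarith
  have hqd : q ≤ 2 * π * d := by
    have : q ≤ ∫ θ in (-π)..π, (u θ * (1 / 2) + d * 1) := by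
      refine intervalIntegral.integral_mono_on hpi (ci (by fun_prop)) (ci (by fun_prop)) fun θ _ => ?_
      have h1 := h.min_le θ
      have h2 := abs_le.1 (h.bd θ)
      rcases le_total 0 (u θ) with h0 | h0 <;> nlinarith
    rw [intervalIntegral.integral_add (ci (by fun_prop)) (ci (by fun_prop)),
      intervalIntegral.integral_mul_const, intervalIntegral.integral_const_mul, hone, hlin] at this
    linarith
  rw [hJ] at hlow hup
  rw [← hd]
  have hr : 1 + u (π / m) = 1 - d := by rw [hd]; ring
  rw [hr] at hup
  have hd0 : 0 < d := by linarith
  have hd2 : d ≤ 1 / 2 := by have := abs_le.1 (h.bd (π / m)); linarith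
  have main : w * Q ≤ 2 * π * (π / 2 - w) * (1 - (1 - d) ^ 4) := by
    linarith
  have b1 : 0 < 1 - (1 - d) ^ 4 := by
    have : (1 - d) ^ 4 < 1 := pow_lt_one₀ (by linarith) (by linarith) (by norm_num)
    linarith
  have b2 : 1 - (1 - d) ^ 4 ≤ 4 * d := by nlinarith [sq_nonneg (d * (d - 2)), sq_nonneg d, mul_pos hd0 hd0]
  have hpp := pi_pos
  have hp3 := pi_gt_three
  have hp4 := pi_lt_d2
  have hQ0 : 0 ≤ Q := by linarith
  -- For `w ≥ π / 4` divide `main` by `w`; for smaller `w` the trivial bound `hqd` suffices.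
  rcases le_total (π / 4) w with hw | hw
  · have ha : 0 ≤ π / 2 - w := by
      by_contra hc
      push Not at hc
      have : 0 ≤ w * Q := mul_nonneg (by linarith) hQ0
      have : 2 * π * (π / 2 - w) * (1 - (1 - d) ^ 4) < 0 :=
        mul_neg_of_neg_of_pos (mul_neg_of_pos_of_neg (by positivity) hc) b1
      linarith
    have m1 : π / 4 * (9 / 4 * q) ≤ w * Q := mul_le_mul hw hQq (by positivity) (by linarith)
    have m2 : 2 * π * (π / 2 - w) * (1 - (1 - d) ^ 4) ≤ 2 * π * (π / 2 - w) * (4 * d) :=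
      mul_le_mul_of_nonneg_left b2 (by positivity)
    have m3 : π * (9 / 16 * q) ≤ π * (8 * ((π / 2 - w) * d)) := by linarith
    have m4 := le_of_mul_le_mul_left m3 hpp
    nlinarith
  · have m1 : π / 4 * d ≤ (π / 2 - w) * d := mul_le_mul_of_nonneg_right (by linarith) hd0.le
    have m2 : π * q ≤ π * (2 * π * d) := mul_le_mul_of_nonneg_left hqd hpp.le
    have m3 : π * (π * d) ≤ 3.15 * (π * d) := mul_le_mul_of_nonneg_right hp4.le (by positivity)
    have : 0 < π * d := by positivity
    linarith

end Prof

/-! ### Comparison of two boundary points near the tip -/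

/-- Bernoulli's inequality: an additive gap `ε` between radii gives a factor `1 + mε` between their
`m`-th powers. -/
lemma bern {m : ℕ} {a b ε : ℝ} (ha : 0 < a) (ha1 : a ≤ 1) (hε : 0 ≤ ε) (hb : a + ε ≤ b) :
    a ^ m * (1 + m * ε) ≤ b ^ m := by
  have h1 : a * (1 + ε) ≤ b := by nlinarith
  calc a ^ m * (1 + m * ε) ≤ a ^ m * (1 + ε) ^ m :=
        mul_le_mul_of_nonneg_left (one_add_mul_le_pow (by linarith) m) (by positivity)
    _ = (a * (1 + ε)) ^ m := (mul_pow _ _ _).symm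
    _ ≤ b ^ m := pow_le_pow_left₀ (by positivity) h1 m

namespace Prof
variable {m : ℕ} {u : ℝ → ℝ} {c w : ℝ}

lemma edge_anti (h : Prof m u) {s s' : ℝ} (hs : s ≤ s') : h.edge s' ≤ h.edge s := by
  by_contra hlt
  push Not at hlt
  have h1 := (h.lt_edge s' (h.edge_nonneg s) (hlt.trans_le (h.edge_le s'))).2 hlt
  exact lt_irrefl _ ((h.lt_edge s (h.edge_nonneg s) (hlt.trans_le (h.edge_le s'))).1
    (hs.trans_lt h1))

/-- The part of the boundary at depth at least `d / 2` below the unit circle is short. -/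
lemma tail (h : Prof m u) {s d : ℝ} (hd : 0 ≤ d) (hs : s ≤ 1 - d / 2) :
    (π - h.edge s) * d ^ 2 / 2 ≤ ∫ θ in (-π)..π, u θ ^ 2 := by
  have hu := h.cont
  have hi : IntervalIntegrable ({τ : ℝ | s < 1 + u τ}.indicator (fun _ => (1:ℝ))) volume (-π) π :=
    h.slice_integrable s intervalIntegrable_const
  have e : (π - h.edge s) * d ^ 2 / 2
      = ∫ τ in (-π)..π, d ^ 2 / 4 * (1 - {τ : ℝ | s < 1 + u τ}.indicator (fun _ => (1:ℝ)) τ) := by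
    rw [intervalIntegral.integral_const_mul,
      intervalIntegral.integral_sub intervalIntegrable_const hi, h.slice_one]
    simp; ring
  rw [e]
  refine intervalIntegral.integral_mono_on (by linarith [pi_pos])
    ((intervalIntegrable_const.sub hi).const_mul _)
    ((hu.pow 2).intervalIntegrable _ _) fun τ _ => ?_
  simp only [indicator, mem_ofPred_eq]
  split_ifs with hc
  · simp; positivity
  · nlinarith

/-- Since the area is `π`, the largest radius is at least `1`. -/
lemma u_zero_nonneg (h : Prof m u) (hvol : volume.real (starDom u) = π) : 0 ≤ u 0 := by
  by_contra hneg
  push Not at hneg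
  have area := h.integral_one
  have hu := h.cont
  have : ∫ τ in (-π)..π, (1 + u τ) ^ 2 / 2 ≤ ∫ τ in (-π)..π, (1 + u 0) ^ 2 / 2 := by
    refine intervalIntegral.integral_mono_on (by linarith [pi_pos])
      (Continuous.intervalIntegrable (by fun_prop) _ _) intervalIntegrable_const fun τ _ => ?_
    have := h.lo τ
    have := h.le_zero τ
    gcongr
  rw [← area, hvol] at this
  simp at this
  have := h.lo 0
  have hlt : (1 + u 0) ^ 2 < 1 := by nlinarith
  nlinarith [pi_pos]

/-- Pointwise comparison of the slices of the potential at two boundary points near the tip, for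
the thin range of radii where the slices are almost, but not quite, full circles. -/
lemma middle_slice (h : Prof m u) {r₀ e s : ℝ} (hr : r₀ = 1 + u (π / m)) (hr1 : r₀ + 2 * e ≤ 1)
    (he : 0 < e) (hs0 : r₀ < s) (hs1 : s < r₀ + 2 * e) (hne : s ≠ r₀ + e) (T : ℝ) :
    s * (2 * π * m * (Real.log (max (r₀ + e) s) - Real.log (max r₀ s)))
      - 2 * (π - h.edge (r₀ + 2 * e)) *
        (Real.log 2 + 4 * m * e - Real.log m - Real.log (s - r₀))
    ≤ s * arcPot ((r₀ + e) ^ m) T (s ^ m) (h.edge s) - s * arcPot (r₀ ^ m) π (s ^ m) (h.edge s) := by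
  have hm := h.mpos
  have hm0 : m ≠ 0 := by have := h.hm; omega
  have hr0 : 1 / 2 ≤ r₀ := hr ▸ h.lo _
  have hs : 0 < s := by linarith
  have hlt : r₀ ^ m < s ^ m := pow_lt_pow_left₀ hs0 (by linarith) hm0
  have hmax : ∀ r, 0 < r → Real.log (max (r ^ m) (s ^ m)) = m * Real.log (max r s) := by
    intro r hr
    rw [← Real.log_pow]
    congr 1
    rcases le_total r s with h1 | h1
    · rw [max_eq_right h1, max_eq_right (by gcongr)]
    · rw [max_eq_left h1, max_eq_left (by gcongr)]
  have key := arcPot_middle (ρ₀ := r₀ ^ m) (ρ₁ := (r₀ + e) ^ m) (σ := s ^ m) (by positivity)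
    (by positivity) hlt (fun hh => hne ((pow_left_inj₀ (by linarith) hs.le hm0).1 hh).symm) T
    (h.edge_le s)
  rw [hmax _ (by linarith), hmax _ (by linarith)] at key
  have hb := bern (m := m) (a := r₀) (b := s) (ε := s - r₀) (by linarith) (by linarith)
    (by linarith) (by linarith)
  have hx : 0 < s - r₀ := by linarith
  have hlog : m * Real.log r₀ + Real.log m + Real.log (s - r₀) ≤ Real.log (s ^ m - r₀ ^ m) := by
    rw [← Real.log_pow, ← Real.log_mul (by positivity) (by positivity),
      ← Real.log_mul (by positivity) (by positivity)]
    refine Real.log_le_log (by positivity) ?_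
    linarith
  have hl2 : Real.log (max (r₀ + e) s) - Real.log r₀ ≤ 4 * e := by
    rw [← Real.log_div (by positivity) (by positivity)]
    have hmm : max (r₀ + e) s ≤ r₀ + 2 * e := max_le (by linarith) hs1.le
    have : max (r₀ + e) s / r₀ ≤ 1 + 4 * e := by
      rw [div_le_iff₀ (by linarith)]
      nlinarith
    have := Real.log_le_sub_one_of_pos (x := max (r₀ + e) s / r₀) (by positivity)
    linarith
  have hX : Real.log 2 + m * Real.log (max (r₀ + e) s) - Real.log (s ^ m - r₀ ^ m)
      ≤ Real.log 2 + 4 * m * e - Real.log m - Real.log (s - r₀) := by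
    have := mul_le_mul_of_nonneg_left hl2 hm.le
    linarith
  have hX0 : 0 ≤ Real.log 2 + 4 * m * e - Real.log m - Real.log (s - r₀) := by
    have e1 : Real.log m + Real.log (s - r₀) ≤ m * (s - r₀) - 1 := by
      rw [← Real.log_mul (by positivity) (by positivity)]
      exact Real.log_le_sub_one_of_pos (by positivity)
    have := Real.log_pos (one_lt_two)
    nlinarith
  have hpt : 0 ≤ π - h.edge s := by linarith [h.edge_le s]
  have hedge := h.edge_anti hs1.le
  have hloss : 2 * (π - h.edge s) *
      (Real.log 2 + m * Real.log (max (r₀ + e) s) - Real.log (s ^ m - r₀ ^ m))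
      ≤ 2 * (π - h.edge (r₀ + 2 * e)) *
        (Real.log 2 + 4 * m * e - Real.log m - Real.log (s - r₀)) :=
    (mul_le_mul_of_nonneg_left hX (by linarith)).trans
      (mul_le_mul_of_nonneg_right (by linarith) hX0)
  set P := 2 * (π - h.edge (r₀ + 2 * e)) *
        (Real.log 2 + 4 * m * e - Real.log m - Real.log (s - r₀)) with hP
  have hP0 : 0 ≤ P := mul_nonneg (by linarith) hX0
  have k2 := mul_le_mul_of_nonneg_left (key.trans' (sub_le_sub_left hloss _)) hs.le
  have : s * P ≤ P := by nlinarith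
  linarith

set_option maxHeartbeats 1000000 in
/-- The boundary identities at the tip and at a boundary point slightly above it contradict the
energy comparison, for a deep spike (`15000 ≤ m * d`) carrying little mass (`hq`). -/
lemma step_two (h : Prof m u) (hvol : volume.real (starDom u) = π) (hb : BdryEq u c w)
    {d : ℝ} (hd : d = -u (π / m)) (hd0 : 0 < d) (hmd : 15000 ≤ m * d)
    (hq : ∫ θ in (-π)..π, u θ ^ 2 < d ^ 2 / 2) : False := by
  have hm := h.mpos
  have hm0 : m ≠ 0 := by have := h.hm; omega
  obtain ⟨r₀, hr⟩ : ∃ r₀, r₀ = 1 + u (π / m) := ⟨_, rfl⟩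
  -- The step `e` is a small multiple of `d`, so that the loss `32 q / 1000` is below `π q / 50`, but
  -- still satisfies `m * e ≥ 15`, so that `m`-th powers of radii `e` apart differ by a factor `16`.
  obtain ⟨e, he⟩ : ∃ e, e = d / 1000 := ⟨_, rfl⟩
  have hr0 : 1 / 2 ≤ r₀ := hr ▸ h.lo _
  have he0 : 0 < e := by linarith
  have hme : 15 ≤ m * e := by rw [he]; linarith
  have h10 := h.u_zero_nonneg hvol
  set q := ∫ θ in (-π)..π, u θ ^ 2 with hqdef
  have hs1 : r₀ + 2 * e ≤ 1 - d / 2 := by linarith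
  have htail := h.tail hd0.le hs1
  rw [← hqdef] at htail
  set t₁ := h.edge (r₀ + 2 * e) with ht₁
  have ht1pi : t₁ < π := by
    refine (h.edge_le _).lt_of_ne fun hh => ?_
    have := h.u_edge (s := r₀ + 2 * e) (by linarith) (by linarith)
    rw [← ht₁] at this
    rw [ht₁, hh] at this
    linarith
  have hq0 : 0 < q := by
    refine lt_of_lt_of_le ?_ htail
    have : 0 < π - t₁ := by linarith
    positivity
  have hstep := h.step_one hvol hb (by linarith)
  rw [← hqdef, ← hd] at hstep
  obtain ⟨T, hT⟩ : ∃ T, T = h.edge (r₀ + e) := ⟨_, rfl⟩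
  have huT : 1 + u (T / m) = r₀ + e := by
    rw [hT]; exact h.u_edge (by linarith) (by linarith)
  have hTt : t₁ ≤ T := by rw [hT]; exact h.edge_anti (by linarith)
  have hTpi : T ≤ π := hT ▸ h.edge_le _
  have hpt : π - t₁ < 1 := by
    by_contra hn
    push Not at hn
    have := mul_le_mul_of_nonneg_right hn (sq_nonneg d)
    linarith
  have hcos : Real.cos T ≤ -(1 / 2) := by
    have h1 : Real.cos T = -Real.cos (π - T) := by rw [Real.cos_pi_sub]; ring
    have := Real.one_sub_sq_div_two_le_cos (x := π - T)
    have : (π - T) ^ 2 ≤ 1 := pow_le_one₀ (by linarith) (by linarith)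
    linarith
  -- The boundary identities at the point of radius `r₀ + e` and at the tip, both sliced.
  obtain ⟨i1, e1⟩ := h.logPot_polar (r := r₀ + e) (by linarith) (by linarith) (T / m)
  obtain ⟨i0, e0⟩ := h.logPot_polar (r := r₀) (by linarith) (by linarith) (π / m)
  have b1 := hb (T / m)
  have b0 := hb (π / m)
  rw [huT, e1] at b1
  rw [← hr, e0] at b0
  rw [mul_div_cancel₀ _ hm.ne'] at b1 b0
  simp only [mul_div_cancel₀ _ hm.ne'] at i1 i0
  set F₁ : ℝ → ℝ := fun s => s * arcPot ((r₀ + e) ^ m) T (s ^ m) (h.edge s) with hF₁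
  set F₀ : ℝ → ℝ := fun s => s * arcPot (r₀ ^ m) π (s ^ m) (h.edge s) with hF₀
  have cL : ∀ r : ℝ, 0 < r → Continuous fun s => s * Real.log (max r s) := fun r hr =>
    continuous_id.mul ((continuous_const.max continuous_id).log
      fun s => (lt_max_of_lt_left hr).ne')
  -- `M` is the difference of the slice potentials for full slices, `G` the deviation from it.
  set M : ℝ → ℝ := fun s => s * (2 * π * m * (Real.log (max (r₀ + e) s) - Real.log (max r₀ s)))
    with hM
  have hMe : ∀ s, M s = 2 * π * m * (s * Real.log (max (r₀ + e) s) - s * Real.log (max r₀ s)) :=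
    fun s => by simp only [hM]; ring
  have cM : Continuous M := by
    rw [funext hMe]
    exact continuous_const.mul ((cL _ (by linarith)).sub (cL _ (by linarith)))
  have iM : ∫ s in (0:ℝ)..2, M s = m * (π / 2 * ((r₀ + e) ^ 2 - r₀ ^ 2)) := by
    simp only [hMe]
    rw [intervalIntegral.integral_const_mul, intervalIntegral.integral_sub
      ((cL _ (by linarith)).intervalIntegrable _ _) ((cL _ (by linarith)).intervalIntegrable _ _),
      integral_mul_log_max (by linarith) two_pos, integral_mul_log_max (by linarith) two_pos,
      max_eq_left (show r₀ + e ≤ 2 by linarith), max_eq_left (show r₀ ≤ 2 by linarith),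
      max_eq_right (sub_nonneg.2 (pow_le_pow_left₀ (by linarith) (by linarith) 2)),
      max_eq_right (sub_nonneg.2 (pow_le_pow_left₀ (by linarith) (by linarith) 2))]
    ring
  have sub : ∀ {f : ℝ → ℝ} {a b : ℝ}, IntervalIntegrable f volume 0 2 → 0 ≤ a → a ≤ b → b ≤ 2 →
      IntervalIntegrable f volume a b := fun {f a b} hf ha hab hb =>
    hf.mono_set (by
      rw [uIcc_of_le hab, uIcc_of_le zero_le_two]
      exact Icc_subset_Icc ha hb)
  set G : ℝ → ℝ := fun s => F₁ s - F₀ s - M s with hG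
  have iG : IntervalIntegrable G volume 0 2 := (i1.sub i0).sub (cM.intervalIntegrable _ _)
  have hGint : ∫ s in (0:ℝ)..2, G s = m * (w - π / 2) * ((r₀ + e) ^ 2 - r₀ ^ 2) := by
    rw [hG, intervalIntegral.integral_sub (i1.sub i0) (cM.intervalIntegrable _ _),
      intervalIntegral.integral_sub i1 i0, iM]
    rw [one_div, inv_mul_eq_iff_eq_mul₀ hm.ne'] at b1 b0
    rw [b1, b0]; ring
  -- Slices inside the inscribed disk are full circles.
  have g1 : 0 ≤ ∫ s in (0:ℝ)..r₀, G s := by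
    have iG1 : IntervalIntegrable G volume 0 r₀ := sub iG le_rfl (by linarith) (by linarith)
    refine (intervalIntegral.integral_zero (a := 0) (b := r₀) (μ := volume)).symm.le.trans
      (intervalIntegral.integral_mono_on_of_le_Ioo (by linarith) intervalIntegrable_const iG1
        fun s hs => ?_)
    have hs0 := hs.1
    have hmax : ∀ r, 0 < r → s < r → Real.log (max (r ^ m) (s ^ m)) = m * Real.log (max r s) := by
      intro r hr hsr
      rw [max_eq_left hsr.le, max_eq_left (by gcongr), Real.log_pow]
    simp only [hG, hF₁, hF₀, hM]
    rw [h.edge_eq_pi (by rw [← hr]; exact hs.2), arcPot_pi (by positivity) (by positivity),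
      arcPot_pi (by positivity) (by positivity), hmax _ (by linarith) (by linarith [hs.2]),
      hmax _ (by linarith) hs.2]
    apply le_of_eq; ring
  -- Far slices, where `M` vanishes.
  have g3 : 0 ≤ ∫ s in (r₀ + 2 * e)..2, G s := by
    have iG3 : IntervalIntegrable G volume (r₀ + 2 * e) 2 :=
      sub iG (by linarith) (by linarith) le_rfl
    refine (intervalIntegral.integral_zero (a := r₀ + 2 * e) (b := 2) (μ := volume)).symm.le.trans
      (intervalIntegral.integral_mono_on_of_le_Ioo (by linarith) intervalIntegrable_const iG3
        fun s hs => ?_)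
    have hs0 : 0 < s := by linarith [hs.1]
    have hb1 := bern (m := m) (a := r₀) (b := r₀ + e) (ε := e) (by linarith) (by linarith) he0.le le_rfl
    have hb2 := bern (m := m) (a := r₀ + e) (b := s) (ε := e) (by linarith) (by linarith) he0.le
      (by linarith [hs.1])
    have hp1 : 0 < r₀ ^ m := by positivity
    have hp2 : 0 < (r₀ + e) ^ m := by positivity
    have far := arcPot_far (ρ₀ := r₀ ^ m) (ρ₁ := (r₀ + e) ^ m) (σ := s ^ m) hp1
      (hb1.trans' (by rw [mul_comm]; exact mul_le_mul_of_nonneg_left (by linarith) hp1.le))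
      (hb2.trans' (by rw [mul_comm]; exact mul_le_mul_of_nonneg_left (by linarith) hp2.le)) hcos (h.edge_nonneg s) (h.edge_le s)
    simp only [hG, hF₁, hF₀, hM]
    rw [max_eq_right (show r₀ + e ≤ s by linarith [hs.1]), max_eq_right (show r₀ ≤ s by linarith [hs.1])]
    have := mul_le_mul_of_nonneg_left far hs0.le
    linarith
  have iX : IntervalIntegrable (fun s => Real.log (s - r₀)) volume r₀ (r₀ + 2 * e) := by
    have := (intervalIntegral.intervalIntegrable_log' (a := 0) (b := 2 * e)).comp_sub_right r₀
    rw [zero_add, add_comm] at this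
    exact this
  have iX' : IntervalIntegrable (fun s => -(2 * (π - t₁) *
        (Real.log 2 + 4 * m * e - Real.log m - Real.log (s - r₀)))) volume r₀ (r₀ + 2 * e) :=
    ((intervalIntegrable_const.sub iX).const_mul _).neg
  -- Slices in between: the loss is integrated explicitly, and the logarithms help since
  -- `m * (2 * e) ≥ 2 * exp 1`.
  have g2 : -(2 * (π - t₁) * (8 * m * e ^ 2)) ≤ ∫ s in r₀..(r₀ + 2 * e), G s := by
    have hv : ∫ s in r₀..(r₀ + 2 * e), -(2 * (π - t₁) *
        (Real.log 2 + 4 * m * e - Real.log m - Real.log (s - r₀)))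
        = -(2 * (π - t₁) * ((Real.log 2 + 4 * m * e - Real.log m) * (2 * e)
            - (2 * e * Real.log (2 * e) - 2 * e))) := by
      rw [intervalIntegral.integral_neg, intervalIntegral.integral_const_mul,
        intervalIntegral.integral_sub intervalIntegrable_const iX,
        intervalIntegral.integral_comp_sub_right (fun s => Real.log s) r₀, sub_self,
        add_sub_cancel_left, integral_log, intervalIntegral.integral_const, smul_eq_mul]
      ring
    have hlog : Real.log 2 + 1 ≤ Real.log m + Real.log (2 * e) := by
      rw [← Real.log_mul (by positivity) (by positivity)]
      have h30 : Real.log 2 + 1 = Real.log (2 * Real.exp 1) := by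
        rw [Real.log_mul two_ne_zero (Real.exp_ne_zero 1), Real.log_exp]
      rw [h30]
      refine Real.log_le_log (by positivity) ?_
      have := Real.exp_one_lt_d9
      linarith
    have hle : -(2 * (π - t₁) * (8 * m * e ^ 2)) ≤ ∫ s in r₀..(r₀ + 2 * e), -(2 * (π - t₁) *
        (Real.log 2 + 4 * m * e - Real.log m - Real.log (s - r₀))) := by
      rw [hv]
      refine neg_le_neg (mul_le_mul_of_nonneg_left ?_ (by linarith))
      have := mul_le_mul_of_nonneg_left hlog (show 0 ≤ 2 * e by linarith)
      linarith
    refine hle.trans (intervalIntegral.integral_mono_ae_restrict (by linarith) iX'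
      (sub iG (by linarith) (by linarith) (by linarith)) ?_)
    have hne : ∀ x : ℝ, ∀ᵐ s ∂(volume.restrict (Icc r₀ (r₀ + 2 * e))), s ≠ x := fun x =>
      ae_restrict_of_ae (by simp [ae_iff])
    filter_upwards [hne r₀, hne (r₀ + e), hne (r₀ + 2 * e), ae_restrict_mem measurableSet_Icc]
      with s n0 n1 n2 hs
    have := h.middle_slice hr (by linarith) he0 (lt_of_le_of_ne hs.1 n0.symm)
      (lt_of_le_of_ne hs.2 n2) n1 T
    simp only [hG, hF₁, hF₀, hM]
    rw [← ht₁] at this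
    linarith
  have hsplit : ∫ s in (0:ℝ)..2, G s = (∫ s in (0:ℝ)..r₀, G s) + (∫ s in r₀..(r₀ + 2 * e), G s)
      + ∫ s in (r₀ + 2 * e)..2, G s := by
    rw [intervalIntegral.integral_add_adjacent_intervals, intervalIntegral.integral_add_adjacent_intervals]
    all_goals refine sub iG ?_ ?_ ?_ <;> linarith
  have fin : (π / 2 - w) * ((r₀ + e) ^ 2 - r₀ ^ 2) ≤ 2 * (π - t₁) * (8 * e ^ 2) := by
    have : m * ((π / 2 - w) * ((r₀ + e) ^ 2 - r₀ ^ 2)) ≤ m * (2 * (π - t₁) * (8 * e ^ 2)) := by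
      linarith
    exact le_of_mul_le_mul_left this hm
  have ha : 0 ≤ π / 2 - w :=
    le_of_mul_le_mul_right (hstep.trans' (by rw [zero_mul]; positivity)) hd0
  have hlow : (π / 2 - w) * e ≤ (π / 2 - w) * ((r₀ + e) ^ 2 - r₀ ^ 2) := by
    refine mul_le_mul_of_nonneg_left ?_ ha
    have := mul_nonneg he0.le (show 0 ≤ 2 * r₀ - 1 + e by linarith)
    linarith
  have hpi := pi_gt_three
  have : π * q / 50 ≤ 32 * q / 1000 := by
    calc π * q / 50 ≤ (π / 2 - w) * d := hstep
      _ = 1000 * ((π / 2 - w) * e) := by rw [he]; ring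
      _ ≤ 1000 * (2 * (π - t₁) * (8 * e ^ 2)) := by linarith
      _ = 32 / 1000 * ((π - t₁) * d ^ 2 / 2) := by rw [he]; ring
      _ ≤ 32 * q / 1000 := by linarith
  have := mul_pos (sub_pos.2 hpi) hq0
  linarith

end Prof

/-! ### Identification of the patch with the star-shaped domain -/

/-- A nonempty bounded open set whose boundary is the polar graph of `1 + u` is the domain inside the
graph: a point outside the graph could be moved to infinity along its ray without crossing the
boundary, and the inside of the graph is connected. -/
lemma Prof.eq_starDom {m : ℕ} {u : ℝ → ℝ} (h : Prof m u) {E : Set ℂ} (hE : IsOpen E)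
    (hbd : IsBounded E) (hne : E.Nonempty)
    (hf : ∀ z, z ∈ frontier E ↔ ∃ θ : ℝ, z = ((1 + u θ : ℝ) : ℂ) * Complex.exp (θ * Complex.I)) :
    E = starDom u := by
  have hfr : ∀ z ∈ frontier E, ‖z‖ = 1 + u (Complex.arg z) := by
    intro z hz
    obtain ⟨θ, rfl⟩ := (hf z).1 hz
    have hp : 0 < 1 + u θ := by linarith [h.lo θ]
    rw [h.u_arg hp, norm_mul, Complex.norm_exp_ofReal_mul_I, mul_one, Complex.norm_of_nonneg hp.le]
  have spread : ∀ s : Set ℂ, IsPreconnected s → (∀ z ∈ s, ‖z‖ ≠ 1 + u (Complex.arg z)) →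
      (s ∩ E).Nonempty → s ⊆ E := by
    intro s hs hsf hsE
    refine hs.subset_of_closure_inter_subset hE hsE fun z hz => ?_
    by_contra hzE
    refine hsf z hz.2 (hfr z ⟨hz.1, ?_⟩)
    rwa [hE.interior_eq]
  have hin : E ⊆ starDom u := by
    intro z hz
    by_contra hzs
    have hlt : 1 + u (Complex.arg z) < ‖z‖ := by
      refine lt_of_le_of_ne (not_lt.1 hzs) fun heq => ?_
      have : z ∈ frontier E := by
        rw [hf]
        exact ⟨Complex.arg z, by rw [heq, Complex.norm_mul_exp_arg_mul_I]⟩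
      exact this.2 (by rwa [hE.interior_eq])
    have hlo := h.lo (Complex.arg z)
    obtain ⟨R, hR⟩ := hbd.exists_norm_le
    have hray := spread ((fun t : ℝ => (t : ℂ) * z) '' Ici 1)
      (isPreconnected_Ici.image _ (by fun_prop)) (by
        rintro _ ⟨t, ht, rfl⟩
        have ht1 : (1:ℝ) ≤ t := ht
        simp only
        rw [Complex.arg_real_mul _ (by linarith), norm_mul, Complex.norm_of_nonneg (by linarith)]
        nlinarith) ⟨z, ⟨1, self_mem_Ici, by simp⟩, hz⟩
    have habs := abs_nonneg R
    have hmem := hR _ (hray ⟨2 * (|R| + 1), by simp only [mem_Ici]; linarith, rfl⟩)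
    rw [norm_mul, Complex.norm_of_nonneg (by linarith)] at hmem
    have := le_abs_self R
    nlinarith
  refine hin.antisymm (spread _ ?_ (fun z hz => ne_of_lt hz) ?_)
  · have hz0 : (0:ℂ) ∈ starDom u := by
      have := h.lo (Complex.arg 0)
      simp only [starDom, mem_ofPred_eq, norm_zero]; linarith
    refine (StarConvex.isPathConnected (a := (0:ℂ)) ?_ hz0).isConnected.isPreconnected
    refine starConvex_zero_iff.2 fun z hz t ht0 ht1 => ?_
    rcases ht0.eq_or_lt with rfl | htp
    · simpa using hz0
    · have hz' : ‖z‖ < 1 + u (Complex.arg z) := hz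
      simp only [starDom, mem_ofPred_eq, Complex.real_smul]
      rw [Complex.arg_real_mul _ htp, norm_mul, Complex.norm_of_nonneg ht0]
      nlinarith [norm_nonneg z]
  · exact hne.mono fun z hz => ⟨hin hz, hz⟩

/-- The isometric identification of `ℂ` with the plane. -/
def toR2 : ℂ ≃ₗᵢ[ℝ] R2 := Complex.orthonormalBasisOneI.repr

lemma toR2_polar (r θ : ℝ) : toR2 ((r : ℂ) * Complex.exp (θ * Complex.I)) = polar r θ := by
  ext i
  fin_cases i <;>
  simp [toR2, Complex.orthonormalBasisOneI_repr_apply, polar, pt, Complex.exp_mul_I, ← Complex.ofReal_cos, ← Complex.ofReal_sin]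

lemma toR2_measurePreserving : MeasurePreserving toR2 :=
  Complex.orthonormalBasisOneI.measurePreserving_repr

/-- The Newtonian potential in `R2` is the logarithmic potential in `ℂ`, up to the factor `2π`. -/
lemma patchConv_toR2 {D : Set R2} (x : ℂ) :
    patchConv D (toR2 x) = 1 / (2 * π) * logPot (toR2 ⁻¹' D) x := by
  rw [patchConv, logPot, ← integral_const_mul, ← toR2_measurePreserving.setIntegral_preimage_emb
    toR2.toHomeomorph.measurableEmbedding]
  refine integral_congr_ae (Filter.Eventually.of_forall fun y => ?_)
  simp only [nker]
  rw [← map_sub, LinearIsometryEquiv.norm_map]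

lemma abs_le_supNorm {u : ℝ → ℝ} {P : ℝ} (hu : Continuous u) (hP : 0 < P)
    (hper : Function.Periodic u P) (θ : ℝ) : |u θ| ≤ supNorm u := by
  refine le_ciSup (f := fun θ => |u θ|) ?_ θ
  have hc : IsCompact (range fun θ => |u θ|) := by
    have hp : Function.Periodic (fun θ => |u θ|) P := fun x => by simp only [hper x]
    rw [← hp.image_Icc hP 0]
    exact isCompact_Icc.image hu.abs
  exact hc.bddAbove

/-- No inward spikes: either `1 − r_min ≤ c/m`, or
`∫ u² ≥ C (1 − r_min)²`, where `r_min = 1 + u(π/m)`. -/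
theorem no_inward_spike :
    ∃ c > (0 : ℝ), ∃ C > (0 : ℝ), ∃ m₁ : ℕ, 3 ≤ m₁ ∧
      ∀ (m : ℕ), m₁ ≤ m → ∀ (D : Set R2) (Ω : ℝ) (u : ℝ → ℝ),
        IsPatchSolution D Ω → volume D = ENNReal.ofReal π →
        ContDiff ℝ 2 u → (∀ θ : ℝ, -1 < u θ) →
        (∀ θ : ℝ, u (-θ) = u θ) → Function.Periodic u (2 * π / m) →
        (∀ θ ∈ Set.Ioo (0 : ℝ) (π / m), deriv u θ < 0) →
        supNorm u ≤ 1/2 →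
        frontier D = polarGraph u →
        1 - (1 + u (π / m)) ≤ c / m ∨
          (∫ θ in (0 : ℝ)..(2 * π), (u θ) ^ 2) ≥ C * (1 - (1 + u (π / m))) ^ 2 := by
  refine ⟨15000, by norm_num, 1 / 2, by norm_num, 3, le_rfl, ?_⟩
  intro m hm D Ω u hsol hvol hC2 _ heven hper hder hsup hfr
  obtain ⟨hopen, hbdd, -, -, c, hc⟩ := hsol
  have hmpos : (0:ℝ) < m := by exact_mod_cast (by omega : 0 < m)
  have hcont := hC2.continuous
  have hP : Prof m u :=
    { hm := by omega
      cont := hcont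
      even := heven
      per := hper
      anti := (strictAntiOn_of_deriv_neg (convex_Icc _ _) hcont.continuousOn
        (by simpa only [interior_Icc] using hder)).antitoneOn
      bd := fun θ => (abs_le_supNorm hcont (by positivity) hper θ).trans hsup }
  have hE : toR2 ⁻¹' D = starDom u := by
    refine hP.eq_starDom (hopen.preimage toR2.continuous) ?_ ?_ fun z => ?_
    · exact toR2.antilipschitz.isBounded_preimage hbdd
    · have : D.Nonempty := by
        rw [nonempty_iff_ne_empty]
        rintro rfl
        simp [eq_comm, ENNReal.ofReal_eq_zero, pi_pos.not_ge] at hvol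
      exact this.preimage toR2.surjective
    · have : frontier (toR2 ⁻¹' D) = toR2 ⁻¹' frontier D :=
        (toR2.toHomeomorph.preimage_frontier D).symm
      rw [this, hfr]
      simp only [polarGraph, mem_preimage, mem_ofPred_eq, ← toR2_polar, toR2.injective.eq_iff]
  have hv : volume.real (starDom u) = π := by
    rw [← hE, measureReal_def, toR2_measurePreserving.measure_preimage
      hopen.measurableSet.nullMeasurableSet, hvol, ENNReal.toReal_ofReal pi_pos.le]
  have hb : BdryEq u (2 * π * c) (π * Ω) := by
    intro θ
    have hmem : toR2 (((1 + u θ : ℝ) : ℂ) * Complex.exp (θ * Complex.I)) ∈ frontier D := by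
      rw [hfr, toR2_polar]; exact ⟨θ, rfl⟩
    have := hc _ hmem
    rw [streamFun, patchConv_toR2, hE, LinearIsometryEquiv.norm_map, norm_mul,
      Complex.norm_exp_ofReal_mul_I, mul_one, Complex.norm_of_nonneg (by linarith [hP.lo θ])] at this
    rw [← this]
    field_simp
    ring
  have hqq : ∫ θ in (0:ℝ)..(2 * π), u θ ^ 2 = ∫ θ in (-π)..π, u θ ^ 2 := by
    have hp : Function.Periodic (fun θ => u θ ^ 2) (2 * π) := fun x => by simp only [hP.per2 x]
    have := hp.intervalIntegral_add_eq 0 (-π)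
    rwa [zero_add, show -π + 2 * π = π by ring] at this
  rw [hqq]
  by_contra hcon
  push Not at hcon
  obtain ⟨h1, h2⟩ := hcon
  have hd : 15000 / (m:ℝ) < -u (π / m) := by linarith
  have hd0 : 0 < -u (π / m) := hd.trans' (by positivity)
  refine hP.step_two hv hb rfl hd0 ?_ ?_
  · rw [div_lt_iff₀ hmpos] at hd; linarith
  · calc _ < _ := h2
      _ = _ := by ring
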